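/- A BIBS system is SIIOS if and only if it admits an SIIOS-Lyapunov function. -/

import Mathlib

open MeasureTheory Set Filter Topology
open scoped ENNReal NNReal

noncomputable section

/-- A function of class `K`: continuous, strictly increasing on `[0,∞)` and vanishing at `0`. -/
def IsClassK (α : ℝ → ℝ) : Prop :=
  ContinuousOn α (Ici 0) ∧ StrictMonoOn α (Ici 0) ∧ α 0 = 0

/-- A function of class `K∞`: class `K` and unbounded. -/
def IsClassKInfty (α : ℝ → ℝ) : Prop :=
  IsClassK α ∧ Tendsto α atTop atTop

/-- A function of class `KL`. -/
def IsClassKL (β : ℝ → ℝ → ℝ) : Prop :=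
  (∀ t ∈ Ici (0:ℝ), IsClassK fun s => β s t) ∧
  ∀ s ∈ Ici (0:ℝ), AntitoneOn (fun t => β s t) (Ici 0) ∧
    Tendsto (fun t => β s t) atTop (𝓝 0)

/-- Admissible inputs: measurable and locally essentially bounded on `[0,∞)`. -/
def IsInput {m : ℕ} (u : ℝ → EuclideanSpace ℝ (Fin m)) : Prop :=
  Measurable u ∧ ∀ T > (0:ℝ), ∃ C : ℝ, ∀ᵐ t ∂(volume.restrict (Icc 0 T)), ‖u t‖ ≤ C

/-- The essential supremum norm of an input over `[0,∞)`, as an extended nonnegative real. -/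
def uNormE {m : ℕ} (u : ℝ → EuclideanSpace ℝ (Fin m)) : ℝ≥0∞ :=
  essSup (fun t => (‖u t‖₊ : ℝ≥0∞)) (volume.restrict (Ici 0))

/-- An input which is (globally) essentially bounded on `[0,∞)`. -/
def BddInput {m : ℕ} (u : ℝ → EuclideanSpace ℝ (Fin m)) : Prop := uNormE u ≠ ⊤

/-- The essential supremum norm `‖u‖` of an input, as a real number. -/
def uNorm {m : ℕ} (u : ℝ → EuclideanSpace ℝ (Fin m)) : ℝ := (uNormE u).toReal

/-- `x` is the solution map of the forward-complete system `ẋ = f(x,u)`: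
for every initial state `ξ` and admissible input `u`, `t ↦ x t ξ u` solves the corresponding
integral equation on all of `[0,∞)`. -/
def IsSolutionMap {n m : ℕ}
    (f : EuclideanSpace ℝ (Fin n) → EuclideanSpace ℝ (Fin m) → EuclideanSpace ℝ (Fin n))
    (x : ℝ → EuclideanSpace ℝ (Fin n) → (ℝ → EuclideanSpace ℝ (Fin m)) →
      EuclideanSpace ℝ (Fin n)) : Prop :=
  ∀ ξ u, IsInput u → ∀ t ∈ Ici (0:ℝ),
    x t ξ u = ξ + ∫ s in (0:ℝ)..t, f (x s ξ u) (u s)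

/-- The system is bounded-input bounded-state (BIBS): it is forward complete (encoded by the
solution-map property) and trajectories are bounded in terms of a class-`K` function of the
initial state and of the input norm. -/
def IsBIBS {n m : ℕ}
    (f : EuclideanSpace ℝ (Fin n) → EuclideanSpace ℝ (Fin m) → EuclideanSpace ℝ (Fin n))
    (x : ℝ → EuclideanSpace ℝ (Fin n) → (ℝ → EuclideanSpace ℝ (Fin m)) →
      EuclideanSpace ℝ (Fin n)) : Prop :=
  IsSolutionMap f x ∧ ∃ σ : ℝ → ℝ, IsClassK σ ∧ ∀ ξ u, IsInput u → BddInput u →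
    ∀ t ∈ Ici (0:ℝ), ‖x t ξ u‖ ≤ max (σ ‖ξ‖) (σ (uNorm u))

/-- Input-to-output stability (IOS). -/
def IsIOS {n m p : ℕ}
    (h : EuclideanSpace ℝ (Fin n) → EuclideanSpace ℝ (Fin p))
    (x : ℝ → EuclideanSpace ℝ (Fin n) → (ℝ → EuclideanSpace ℝ (Fin m)) →
      EuclideanSpace ℝ (Fin n)) : Prop :=
  ∃ β γ, IsClassKL β ∧ IsClassK γ ∧ ∀ ξ u, IsInput u → BddInput u →
    ∀ t ∈ Ici (0:ℝ), ‖h (x t ξ u)‖ ≤ max (β ‖ξ‖ t) (γ (uNorm u))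

/-- State-independent input-to-output stability (SIIOS). -/
def IsSIIOS {n m p : ℕ}
    (h : EuclideanSpace ℝ (Fin n) → EuclideanSpace ℝ (Fin p))
    (x : ℝ → EuclideanSpace ℝ (Fin n) → (ℝ → EuclideanSpace ℝ (Fin m)) →
      EuclideanSpace ℝ (Fin n)) : Prop :=
  ∃ β γ, IsClassKL β ∧ IsClassK γ ∧ ∀ ξ u, IsInput u → BddInput u →
    ∀ t ∈ Ici (0:ℝ), ‖h (x t ξ u)‖ ≤ max (β ‖h ξ‖ t) (γ (uNorm u))

/-- An SIIOS-Lyapunov function for the system `ẋ = f(x,u)`, `y = h(x)`. -/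
def IsSIIOSLyapunov {n m p : ℕ}
    (f : EuclideanSpace ℝ (Fin n) → EuclideanSpace ℝ (Fin m) → EuclideanSpace ℝ (Fin n))
    (h : EuclideanSpace ℝ (Fin n) → EuclideanSpace ℝ (Fin p))
    (V : EuclideanSpace ℝ (Fin n) → ℝ) : Prop :=
  ContDiff ℝ (⊤:ℕ∞) V ∧ (∀ ξ, 0 ≤ V ξ) ∧
  (∃ α₁ α₂ : ℝ → ℝ, IsClassKInfty α₁ ∧ IsClassKInfty α₂ ∧
    ∀ ξ, α₁ ‖h ξ‖ ≤ V ξ ∧ V ξ ≤ α₂ ‖h ξ‖) ∧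
  ∃ χ α₃ : ℝ → ℝ, IsClassK χ ∧ IsClassK α₃ ∧
    ∀ ξ μ, χ ‖μ‖ ≤ V ξ → fderiv ℝ V ξ (f ξ μ) ≤ -α₃ (V ξ)

/-! ### Comparison functions -/

lemma IsClassK.nonneg {α : ℝ → ℝ} (hα : IsClassK α) {s : ℝ} (hs : 0 ≤ s) : 0 ≤ α s := by
  have := hα.2.1.monotoneOn (self_mem_Ici (a := (0 : ℝ))) hs hs
  rwa [hα.2.2] at this

lemma IsClassK.pos {α : ℝ → ℝ} (hα : IsClassK α) {s : ℝ} (hs : 0 < s) : 0 < α s := by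
  have := hα.2.1 (self_mem_Ici (a := (0 : ℝ))) hs.le hs
  rwa [hα.2.2] at this

lemma IsClassK.mono {α : ℝ → ℝ} (hα : IsClassK α) {s t : ℝ} (hs : 0 ≤ s) (hst : s ≤ t) :
    α s ≤ α t :=
  hα.2.1.monotoneOn hs (hs.trans hst) hst

lemma IsClassK.comp {α δ : ℝ → ℝ} (hα : IsClassK α) (hδ : IsClassK δ) :
    IsClassK fun s => α (δ s) := by
  have hm : MapsTo δ (Ici 0) (Ici 0) := fun s hs => hδ.nonneg hs
  exact ⟨hα.1.comp hδ.1 hm, hα.2.1.comp hδ.2.1 hm, by simp [hδ.2.2, hα.2.2]⟩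

lemma IsClassKInfty.comp {α δ : ℝ → ℝ} (hα : IsClassKInfty α) (hδ : IsClassKInfty δ) :
    IsClassKInfty fun s => α (δ s) :=
  ⟨hα.1.comp hδ.1, hα.2.comp hδ.2⟩

/-- Adding the identity to a class `K` function yields a class `K∞` function. -/
lemma IsClassK.add_id {α : ℝ → ℝ} (hα : IsClassK α) : IsClassKInfty fun s => α s + s := by
  refine ⟨⟨hα.1.add continuousOn_id, fun s hs t ht hst => ?_, by simp [hα.2.2]⟩, ?_⟩
  · exact add_lt_add (hα.2.1 hs ht hst) hst
  · refine tendsto_atTop_mono' _ ?_ tendsto_id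
    filter_upwards [eventually_ge_atTop 0] with s hs
    simpa using hα.nonneg hs

lemma isClassKInfty_const_mul {c : ℝ} (hc : 0 < c) : IsClassKInfty fun s => c * s :=
  ⟨⟨by fun_prop, fun s _ t _ hst => by simpa using mul_lt_mul_of_pos_left hst hc, by simp⟩,
    tendsto_id.const_mul_atTop hc⟩

lemma OrderIso.isClassKInfty (e : ℝ ≃o ℝ) (he : e 0 = 0) : IsClassKInfty e :=
  ⟨⟨e.continuous.continuousOn, e.strictMono.strictMonoOn _, he⟩, e.tendsto_atTop⟩

/-- A class `K∞` function extends to an order automorphism of the real line. -/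
lemma IsClassKInfty.exists_orderIso {α : ℝ → ℝ} (hα : IsClassKInfty α) :
    ∃ e : ℝ ≃o ℝ, e 0 = 0 ∧ ∀ s, 0 ≤ s → e s = α s := by
  set g : ℝ → ℝ := fun s => if 0 ≤ s then α s else s with hg
  have hmono : StrictMono g := by
    intro s t hst
    simp only [hg]
    split_ifs with h1 h2 h2
    · exact hα.1.2.1 h1 h2 hst
    · exact absurd (h1.trans hst.le) h2
    · exact (not_le.1 h1).trans_le (hα.1.nonneg h2)
    · exact hst
  have hsurj : Function.Surjective g := by
    intro y
    rcases lt_or_ge y 0 with hy | hy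
    · exact ⟨y, by simp [hg, not_le.2 hy]⟩
    · obtain ⟨b, hb0, hb⟩ := ((eventually_ge_atTop (0 : ℝ)).and
        (hα.2.eventually_ge_atTop y)).exists
      obtain ⟨s, hs, hsy⟩ := intermediate_value_Icc hb0
        (hα.1.1.mono Icc_subset_Ici_self) (show y ∈ Icc (α 0) (α b) from ⟨by rwa [hα.1.2.2], hb⟩)
      exact ⟨s, by simp [hg, hs.1, hsy]⟩
  refine ⟨hmono.orderIsoOfSurjective g hsurj, ?_, fun s hs => ?_⟩
  · simp [hg, hα.1.2.2]
  · simp [hg, hs]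

lemma OrderIso.symm_zero (e : ℝ ≃o ℝ) (he : e 0 = 0) : e.symm 0 = 0 := by
  rw [OrderIso.symm_apply_eq, he]

/-- A nonnegative monotone function which is positive on `(0,∞)` dominates a class `K` function. -/
lemma exists_classK_le_of_monotone {g : ℝ → ℝ} (hg : Monotone g) (h0 : ∀ s, 0 ≤ g s)
    (hpos : ∀ s, 0 < s → 0 < g s) : ∃ κ, IsClassK κ ∧ ∀ s, 0 ≤ s → κ s ≤ g s := by
  have hint : ∀ a b, IntervalIntegrable g volume a b := fun a b => hg.intervalIntegrable
  set F : ℝ → ℝ := fun s => ∫ r in (0 : ℝ)..s, g r with hF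
  have hFc : Continuous F := intervalIntegral.continuous_primitive hint 0
  have hF0 : F 0 = 0 := by simp [hF]
  have hlow : ∀ s t, s ≤ t → (t - s) * g s ≤ F t - F s := by
    intro s t hst
    rw [hF, intervalIntegral.integral_interval_sub_left (hint _ _) (hint _ _)]
    have := intervalIntegral.integral_mono_on hst (f := fun _ => g s)
      intervalIntegrable_const (hint s t) (fun r hr => hg hr.1)
    simpa using this
  have hup : ∀ s, 0 ≤ s → F s ≤ s * g s := by
    intro s hs
    have := intervalIntegral.integral_mono_on hs (g := fun _ => g s)
      (hint 0 s) intervalIntegrable_const (fun r hr => hg hr.2)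
    simpa using this
  refine ⟨fun s => F s / (1 + s), ⟨?_, ?_, by simp [hF0]⟩, fun s hs => ?_⟩
  · refine hFc.continuousOn.div (by fun_prop) fun s hs => ?_
    have : (0 : ℝ) ≤ s := hs
    positivity
  · intro s hs t ht hst
    have hs' : (0 : ℝ) ≤ s := hs
    have ht' : (0 : ℝ) ≤ t := ht
    simp only
    rw [div_lt_div_iff₀ (by positivity) (by positivity)]
    have hmid : s < (s + t) / 2 := by linarith
    have h1 := hlow s ((s + t) / 2) hmid.le
    have h2 := hlow ((s + t) / 2) t (by linarith)
    have h3 := hup s hs'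
    have h4 := hpos ((s + t) / 2) (by linarith)
    have h5 := hg hmid.le
    have h6 := h0 s
    nlinarith [mul_pos (sub_pos.2 hst) h4, mul_nonneg hs' (mul_nonneg (sub_pos.2 hst).le h4.le),
      mul_nonneg (mul_nonneg hs' (sub_pos.2 hst).le) (sub_nonneg.2 h5),
      mul_nonneg (sub_pos.2 hst).le h6, mul_le_mul_of_nonneg_left h3 (sub_pos.2 hst).le,
      mul_le_mul_of_nonneg_left h1 hs', mul_le_mul_of_nonneg_left h2 hs']
  · simp only
    rw [div_le_iff₀ (by positivity)]
    nlinarith [hup s hs, h0 s]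

/-- If `D` is bounded below by a positive constant on each set `{S ≥ c}`, `c > 0`, then
`κ (S x) ≤ D x` for some class `K` function `κ`. -/
lemma exists_classK_le {X : Type*} {S D : X → ℝ} (hS : ∀ x, 0 ≤ S x) (hD : ∀ x, 0 ≤ D x)
    (h : ∀ c, 0 < c → ∃ q, 0 < q ∧ ∀ x, c ≤ S x → q ≤ D x) :
    ∃ κ, IsClassK κ ∧ ∀ x, κ (S x) ≤ D x := by
  set A : ℝ → Set ℝ := fun s => {q | q ∈ Icc (0 : ℝ) 1 ∧ ∀ x, s ≤ S x → q ≤ D x} with hA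
  have hbdd : ∀ s, BddAbove (A s) := fun s => ⟨1, fun q hq => hq.1.2⟩
  have hne : ∀ s, (0 : ℝ) ∈ A s := fun s => ⟨by simp, fun x _ => hD x⟩
  obtain ⟨κ, hκ, hle⟩ := exists_classK_le_of_monotone (g := fun s => sSup (A s))
    (fun s t hst => csSup_le_csSup (hbdd t) ⟨0, hne s⟩
      fun q hq => ⟨hq.1, fun x hx => hq.2 x (hst.trans hx)⟩)
    (fun s => le_csSup (hbdd s) (hne s))
    (fun s hs => by
      obtain ⟨q, hq, hqD⟩ := h s hs
      refine (lt_min hq one_pos).trans_le (le_csSup (hbdd s) ⟨⟨?_, min_le_right _ _⟩, ?_⟩)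
      · exact (lt_min hq one_pos).le
      · exact fun x hx => (min_le_left _ _).trans (hqD x hx))
  exact ⟨κ, hκ, fun x => (hle _ (hS x)).trans
    (csSup_le ⟨0, hne _⟩ fun q hq => hq.2 x le_rfl)⟩

/-! ### Trajectories -/

section Trajectories

variable {E U : Type*} [NormedAddCommGroup E] [NormedSpace ℝ E]

/-- A bounded curve satisfying the integral equation (with the integral possibly undefined)
has an integrable velocity. -/
lemma intervalIntegrable_of_integral_equation {F z : ℝ → E} {ξ : E}
    {C : ℝ} (hz : ∀ t, 0 ≤ t → z t = ξ + ∫ s in (0:ℝ)..t, F s)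
    (hF : ∀ A, MeasurableSet A → AEStronglyMeasurable z (volume.restrict A) →
      AEStronglyMeasurable F (volume.restrict A))
    (hC : ∀ᵐ s ∂(volume.restrict (Ici (0:ℝ))), ‖F s‖ ≤ C) {t : ℝ} (ht : 0 ≤ t) :
    IntervalIntegrable F volume 0 t := by
  set A : Set ℝ := {t | 0 ≤ t ∧ IntervalIntegrable F volume 0 t} with hA
  have hAmono : ∀ b ∈ A, ∀ a, 0 ≤ a → a ≤ b → a ∈ A := fun b hb a ha hab =>
    ⟨ha, hb.2.mono_set (by rw [uIcc_of_le ha, uIcc_of_le hb.1]; exact Icc_subset_Icc_right hab)⟩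
  have hAord : A.OrdConnected := ⟨fun a ha b hb c hc => hAmono b hb c (ha.1.trans hc.1) hc.2⟩
  have hAmeas : MeasurableSet A := hAord.measurableSet
  have hprim : ∀ b ∈ A, ContinuousOn z (Icc 0 b) := by
    intro b hb
    have h1 := intervalIntegral.continuousOn_primitive_interval' hb.2 left_mem_uIcc
    rw [uIcc_of_le hb.1] at h1
    exact (continuousOn_const.add h1).congr fun s hs => hz s hs.1
  have hcont : ContinuousOn z A := by
    intro a ha
    by_cases hmax : ∃ b ∈ A, a < b
    · obtain ⟨b, hb, hab⟩ := hmax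
      refine ((hprim b hb) a ⟨ha.1, hab.le⟩).mono_of_mem_nhdsWithin ?_
      filter_upwards [mem_nhdsWithin_of_mem_nhds (Iio_mem_nhds hab), self_mem_nhdsWithin]
        with s hs hsA
      exact ⟨hsA.1, le_of_lt hs⟩
    · push Not at hmax
      exact ((hprim a ha) a ⟨ha.1, le_rfl⟩).mono fun s hs => ⟨hs.1, hmax s hs⟩
  have hzm : AEStronglyMeasurable z (volume.restrict (Ici (0:ℝ))) := by
    have hU : Ici (0:ℝ) = A ∪ (Ici 0 \ A) := by
      rw [union_sdiff_cancel]; exact fun s hs => hs.1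
    rw [hU, aestronglyMeasurable_union_iff]
    refine ⟨hcont.aestronglyMeasurable hAmeas, ?_⟩
    refine (aestronglyMeasurable_const (b := ξ)).congr ?_
    filter_upwards [ae_restrict_mem (measurableSet_Ici.diff hAmeas)] with s hs
    rw [hz s hs.1, intervalIntegral.integral_undef fun hi => hs.2 ⟨hs.1, hi⟩, add_zero]
  have hFm := hF _ measurableSet_Ici hzm
  rw [intervalIntegrable_iff_integrableOn_Ioc_of_le ht]
  have hsub : Ioc 0 t ⊆ Ici (0:ℝ) := fun s hs => hs.1.le
  exact Integrable.of_bound (hFm.mono_measure (Measure.restrict_mono hsub le_rfl)) C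
    (ae_restrict_of_ae_restrict_of_subset hsub hC)

/-- Gronwall's inequality for a pair of integral curves. -/
lemma norm_sub_le_of_integral_equation {z₁ z₂ F₁ F₂ : ℝ → E} {ξ₁ ξ₂ : E} {M T : ℝ} (hM : 0 ≤ M)
    (hc₁ : ContinuousOn z₁ (Icc 0 T)) (hc₂ : ContinuousOn z₂ (Icc 0 T))
    (hi₁ : IntervalIntegrable F₁ volume 0 T) (hi₂ : IntervalIntegrable F₂ volume 0 T)
    (hz₁ : ∀ t ∈ Icc 0 T, z₁ t = ξ₁ + ∫ s in (0:ℝ)..t, F₁ s)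
    (hz₂ : ∀ t ∈ Icc 0 T, z₂ t = ξ₂ + ∫ s in (0:ℝ)..t, F₂ s)
    (hF : ∀ t ∈ Icc 0 T, ‖F₁ t - F₂ t‖ ≤ M * ‖z₁ t - z₂ t‖) {t : ℝ} (ht : t ∈ Icc 0 T) :
    ‖z₁ t - z₂ t‖ ≤ ‖ξ₁ - ξ₂‖ * Real.exp (M * t) := by
  have hT : 0 ≤ T := ht.1.trans ht.2
  set φ : ℝ → ℝ := IccExtend hT (domRestrict (Icc 0 T) fun s => ‖z₁ s - z₂ s‖) with hφdef
  have hφc : Continuous φ := (((hc₁.sub hc₂).norm).domRestrict).Icc_extend'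
  have hφ : ∀ s ∈ Icc 0 T, φ s = ‖z₁ s - z₂ s‖ := fun s hs => by
    rw [hφdef, IccExtend_of_mem _ _ hs]; rfl
  have hφ0 : ∀ s, 0 ≤ φ s := fun s => norm_nonneg _
  set Φ : ℝ → ℝ := fun t => ‖ξ₁ - ξ₂‖ + M * ∫ s in (0:ℝ)..t, φ s with hΦ
  have hle : ∀ s ∈ Icc 0 T, φ s ≤ Φ s := by
    intro s hs
    have hsub : uIcc 0 s ⊆ uIcc 0 T := by
      rw [uIcc_of_le hs.1, uIcc_of_le hT]; exact Icc_subset_Icc_right hs.2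
    have e : z₁ s - z₂ s = (ξ₁ - ξ₂) + ∫ r in (0:ℝ)..s, (F₁ r - F₂ r) := by
      rw [intervalIntegral.integral_sub (hi₁.mono_set hsub) (hi₂.mono_set hsub), hz₁ s hs, hz₂ s hs]
      abel
    rw [hφ s hs, e]
    refine (norm_add_le _ _).trans (add_le_add le_rfl ?_)
    rw [← intervalIntegral.integral_const_mul]
    refine intervalIntegral.norm_integral_le_of_norm_le hs.1 (ae_of_all _ fun r hr => ?_)
      ((hφc.const_mul M).intervalIntegrable _ _)
    have hr' : r ∈ Icc 0 T := ⟨hr.1.le, hr.2.trans hs.2⟩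
    rw [hφ r hr']
    exact hF r hr'
  have hΦ0 : ∀ s ∈ Icc 0 T, 0 ≤ Φ s := fun s hs => (hφ0 s).trans (hle s hs)
  have hderiv : ∀ s, HasDerivAt Φ (M * φ s) s := fun s =>
    ((intervalIntegral.integral_hasDerivAt_right (hφc.intervalIntegrable _ _)
      (hφc.stronglyMeasurableAtFilter _ _) hφc.continuousAt).const_mul M).const_add _
  have key := norm_le_gronwallBound_of_norm_deriv_right_le (f := Φ) (f' := fun s => M * φ s)
    (δ := ‖ξ₁ - ξ₂‖) (K := M) (ε := 0) (a := 0) (b := T)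
    (fun s _ => (hderiv s).continuousAt.continuousWithinAt)
    (fun s _ => (hderiv s).hasDerivWithinAt) (by simp [hΦ])
    (fun s hs => by
      have hs' : s ∈ Icc 0 T := ⟨hs.1, hs.2.le⟩
      rw [Real.norm_of_nonneg (mul_nonneg hM (hφ0 s)), Real.norm_of_nonneg (hΦ0 s hs'), add_zero]
      exact mul_le_mul_of_nonneg_left (hle s hs') hM) t ht
  rw [gronwallBound_ε0, sub_zero, Real.norm_of_nonneg (hΦ0 t ht)] at key
  rw [← hφ t ht]
  exact (hle t ht).trans key

end Trajectories

section System

variable {n m : ℕ}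
  {f : EuclideanSpace ℝ (Fin n) → EuclideanSpace ℝ (Fin m) → EuclideanSpace ℝ (Fin n)}
  {x : ℝ → EuclideanSpace ℝ (Fin n) → (ℝ → EuclideanSpace ℝ (Fin m)) → EuclideanSpace ℝ (Fin n)}
  {u : ℝ → EuclideanSpace ℝ (Fin m)}

lemma BddInput.ae_norm_le (hb : BddInput u) :
    ∀ᵐ s ∂(volume.restrict (Ici (0:ℝ))), ‖u s‖ ≤ uNorm u := by
  filter_upwards [ENNReal.ae_le_essSup (μ := volume.restrict (Ici (0:ℝ)))
    (fun t => (‖u t‖₊ : ℝ≥0∞))] with s hs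
  have := ENNReal.toReal_mono hb hs
  simpa [uNorm, uNormE] using this

lemma isInput_of_norm_le (hu : Measurable u) {c : ℝ} (hc : ∀ s, ‖u s‖ ≤ c) : IsInput u :=
  ⟨hu, fun _ _ => ⟨c, ae_of_all _ hc⟩⟩

lemma uNormE_le {c : ℝ} (hc : ∀ s, ‖u s‖ ≤ c) : uNormE u ≤ ENNReal.ofReal c := by
  refine essSup_le_of_ae_le _ (ae_of_all _ fun s => ?_)
  have := ENNReal.ofReal_le_ofReal (hc s)
  rwa [ofReal_norm, enorm_eq_nnnorm] at this

lemma bddInput_of_norm_le {c : ℝ} (hc : ∀ s, ‖u s‖ ≤ c) : BddInput u :=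
  ne_top_of_le_ne_top ENNReal.ofReal_ne_top (uNormE_le hc)

lemma uNorm_le {c : ℝ} (hc : ∀ s, ‖u s‖ ≤ c) : uNorm u ≤ c := by
  have h0 : 0 ≤ c := (norm_nonneg _).trans (hc 0)
  have := ENNReal.toReal_mono ENNReal.ofReal_ne_top (uNormE_le hc)
  rwa [ENNReal.toReal_ofReal h0] at this

lemma uNorm_nonneg : 0 ≤ uNorm u := ENNReal.toReal_nonneg

lemma exists_lipschitz_bound
    (hf : LocallyLipschitz fun q : EuclideanSpace ℝ (Fin n) × EuclideanSpace ℝ (Fin m) =>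
      f q.1 q.2) (S c : ℝ) :
    ∃ M : ℝ, 0 ≤ M ∧ ∀ a b μ, ‖a‖ ≤ S → ‖b‖ ≤ S → ‖μ‖ ≤ c → ‖f a μ - f b μ‖ ≤ M * ‖a - b‖ := by
  obtain ⟨K, hK⟩ := (hf.locallyLipschitzOn (s := Metric.closedBall 0 S ×ˢ Metric.closedBall 0 c)
    ).exists_lipschitzOnWith_of_compact
      ((isCompact_closedBall _ _).prod (isCompact_closedBall _ _))
  refine ⟨K, K.2, fun a b μ ha hb hμ => ?_⟩
  have := hK.dist_le_mul (a, μ) (by simp [ha, hμ]) (b, μ) (by simp [hb, hμ])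
  simpa [Prod.dist_eq, dist_eq_norm] using this

lemma exists_norm_bound
    (hf : LocallyLipschitz fun q : EuclideanSpace ℝ (Fin n) × EuclideanSpace ℝ (Fin m) =>
      f q.1 q.2) (S c : ℝ) :
    ∃ B : ℝ, 0 ≤ B ∧ ∀ a μ, ‖a‖ ≤ S → ‖μ‖ ≤ c → ‖f a μ‖ ≤ B := by
  obtain ⟨B, hB⟩ := ((isCompact_closedBall (0 : EuclideanSpace ℝ (Fin n)) S).prod
    (isCompact_closedBall (0 : EuclideanSpace ℝ (Fin m)) c)).exists_bound_of_continuousOn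
      hf.continuous.continuousOn
  refine ⟨max B 0, le_max_right _ _, fun a μ ha hμ => ?_⟩
  exact (hB (a, μ) (by simp [ha, hμ])).trans (le_max_left _ _)

lemma IsBIBS.intervalIntegrable
    (hf : LocallyLipschitz fun q : EuclideanSpace ℝ (Fin n) × EuclideanSpace ℝ (Fin m) =>
      f q.1 q.2) (hB : IsBIBS f x)
    (hu : IsInput u) (hb : BddInput u)
    (ξ : EuclideanSpace ℝ (Fin n)) {t : ℝ} (ht : 0 ≤ t) :
    IntervalIntegrable (fun s => f (x s ξ u) (u s)) volume 0 t := by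
  obtain ⟨hsol, σ, -, hσ⟩ := hB
  obtain ⟨B, -, hB⟩ := exists_norm_bound hf (max (σ ‖ξ‖) (σ (uNorm u))) (uNorm u)
  refine intervalIntegrable_of_integral_equation (z := fun s => x s ξ u) (C := B)
    (fun t ht => hsol ξ u hu t ht) (fun A _ hz => ?_) ?_ ht
  · exact hf.continuous.comp_aestronglyMeasurable
      (hz.prodMk hu.1.aestronglyMeasurable)
  · filter_upwards [hb.ae_norm_le, ae_restrict_mem measurableSet_Ici] with s hs hs0
    exact hB _ _ (hσ ξ u hu hb s hs0) hs

lemma IsBIBS.continuousOn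
    (hf : LocallyLipschitz fun q : EuclideanSpace ℝ (Fin n) × EuclideanSpace ℝ (Fin m) =>
      f q.1 q.2) (hB : IsBIBS f x)
    (hu : IsInput u) (hb : BddInput u) (ξ : EuclideanSpace ℝ (Fin n)) :
    ContinuousOn (fun t => x t ξ u) (Ici 0) := by
  have hC : ∀ b, 0 ≤ b → ContinuousOn (fun t => x t ξ u) (Icc 0 b) := by
    intro b hb0
    have h1 := intervalIntegral.continuousOn_primitive_interval'
      (hB.intervalIntegrable hf hu hb ξ hb0) left_mem_uIcc
    rw [uIcc_of_le hb0] at h1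
    exact (continuousOn_const.add h1).congr fun s hs => hB.1 ξ u hu s hs.1
  intro a ha
  have ha : 0 ≤ a := ha
  refine ((hC (a + 1) (by linarith)) a ⟨ha, by linarith⟩).mono_of_mem_nhdsWithin ?_
  filter_upwards [mem_nhdsWithin_of_mem_nhds (Iio_mem_nhds (lt_add_one a)), self_mem_nhdsWithin]
    with s hs hsA
  exact ⟨hsA, le_of_lt hs⟩

lemma IsBIBS.apply_zero (hB : IsBIBS f x) (hu : IsInput u) (ξ : EuclideanSpace ℝ (Fin n)) : x 0 ξ u = ξ := by
  rw [hB.1 ξ u hu 0 self_mem_Ici, intervalIntegral.integral_same, add_zero]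

lemma IsBIBS.eq_of_integral_equation
    (hf : LocallyLipschitz fun q : EuclideanSpace ℝ (Fin n) × EuclideanSpace ℝ (Fin m) =>
      f q.1 q.2) (hB : IsBIBS f x)
    (hu : Measurable u) {c : ℝ} (hc : ∀ s, ‖u s‖ ≤ c)
    {z : ℝ → EuclideanSpace ℝ (Fin n)} {ξ : EuclideanSpace ℝ (Fin n)} {T : ℝ} (hT : 0 ≤ T)
    (hz : ContinuousOn z (Icc 0 T))
    (hi : IntervalIntegrable (fun s => f (z s) (u s)) volume 0 T)
    (heq : ∀ t ∈ Icc 0 T, z t = ξ + ∫ s in (0:ℝ)..t, f (z s) (u s)) :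
    z T = x T ξ u := by
  have hu' := isInput_of_norm_le hu hc
  have hb := bddInput_of_norm_le hc
  obtain ⟨σ, -, hσ⟩ := hB.2
  obtain ⟨S, hS⟩ := isCompact_Icc.exists_bound_of_continuousOn hz
  obtain ⟨M, hM, hL⟩ := exists_lipschitz_bound hf (max S (max (σ ‖ξ‖) (σ (uNorm u)))) c
  have := norm_sub_le_of_integral_equation hM hz
    ((hB.continuousOn hf hu' hb ξ).mono Icc_subset_Ici_self) hi
    (hB.intervalIntegrable hf hu' hb ξ hT) heq (fun t ht => hB.1 ξ u hu' t ht.1)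
    (fun t ht => hL _ _ _ ((hS t ht).trans (le_max_left _ _))
      ((hσ ξ u hu' hb t ht.1).trans (le_max_right _ _)) (hc t)) (t := T) ⟨hT, le_rfl⟩
  rw [sub_self, norm_zero, zero_mul] at this
  exact sub_eq_zero.1 (norm_le_zero_iff.1 this)

end System

section Concatenation

variable {n m : ℕ}
  {f : EuclideanSpace ℝ (Fin n) → EuclideanSpace ℝ (Fin m) → EuclideanSpace ℝ (Fin n)}
  {x : ℝ → EuclideanSpace ℝ (Fin n) → (ℝ → EuclideanSpace ℝ (Fin m)) → EuclideanSpace ℝ (Fin n)}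

/-- The input equal to the constant `μ` up to time `τ`, followed by `u`. -/
def concatInput (τ : ℝ) (μ : EuclideanSpace ℝ (Fin m)) (u : ℝ → EuclideanSpace ℝ (Fin m)) :
    ℝ → EuclideanSpace ℝ (Fin m) := fun s => if s ≤ τ then μ else u (s - τ)

lemma measurable_concatInput {τ : ℝ} {μ : EuclideanSpace ℝ (Fin m)}
    {u : ℝ → EuclideanSpace ℝ (Fin m)} (hu : Measurable u) : Measurable (concatInput τ μ u) :=
  Measurable.ite measurableSet_Iic measurable_const (hu.comp (measurable_id.sub_const τ))

lemma norm_concatInput_le {τ c : ℝ} {μ : EuclideanSpace ℝ (Fin m)}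
    {u : ℝ → EuclideanSpace ℝ (Fin m)} (hμ : ‖μ‖ ≤ c) (hc : ∀ s, ‖u s‖ ≤ c) (s : ℝ) :
    ‖concatInput τ μ u s‖ ≤ c := by
  unfold concatInput; split_ifs
  exacts [hμ, hc _]

lemma IsBIBS.concat
    (hf : LocallyLipschitz fun q : EuclideanSpace ℝ (Fin n) × EuclideanSpace ℝ (Fin m) =>
      f q.1 q.2) (hB : IsBIBS f x) {u : ℝ → EuclideanSpace ℝ (Fin m)} (hu : Measurable u)
    {c τ t : ℝ} {μ : EuclideanSpace ℝ (Fin m)} (hμ : ‖μ‖ ≤ c) (hc : ∀ s, ‖u s‖ ≤ c)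
    (hτ : 0 ≤ τ) (ht : 0 ≤ t) (ξ : EuclideanSpace ℝ (Fin n)) :
    x (t + τ) ξ (concatInput τ μ u) = x t (x τ ξ fun _ => μ) u := by
  set v := concatInput τ μ u with hv
  have hvm : Measurable v := measurable_concatInput hu
  have hvc : ∀ s, ‖v s‖ ≤ c := norm_concatInput_le hμ hc
  have hvI := isInput_of_norm_le hvm hvc
  have hvB := bddInput_of_norm_le hvc
  have hcont := hB.continuousOn hf hvI hvB ξ
  have hint : ∀ {t : ℝ}, 0 ≤ t → _ := fun {t} ht => hB.intervalIntegrable hf hvI hvB ξ (t := t) ht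
  have hfirst : x τ ξ v = x τ ξ fun _ => μ := by
    have hcg : ∀ t ∈ Icc 0 τ, EqOn (fun s => f (x s ξ v) (v s)) (fun s => f (x s ξ v) μ)
        (uIoc 0 t) := by
      intro t ht s hs
      rw [uIoc_of_le ht.1] at hs
      simp only [hv, concatInput, if_pos (hs.2.trans ht.2)]
    refine hB.eq_of_integral_equation hf (z := fun s => x s ξ v) (u := fun _ => μ) (c := c)
      measurable_const (fun _ => hμ) hτ
      (hcont.mono Icc_subset_Ici_self) ((hint hτ).congr (hcg τ ⟨hτ, le_rfl⟩)) fun t ht => ?_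
    rw [hB.1 ξ v hvI t ht.1]
    congr 1
    exact intervalIntegral.integral_congr_ae (ae_of_all _ fun s hs => hcg t ht hs)
  rw [← hfirst]
  have hcg : ∀ t, 0 ≤ t → EqOn (fun s => f (x (s + τ) ξ v) (v (s + τ)))
      (fun s => f (x (s + τ) ξ v) (u s)) (uIoc 0 t) := by
    intro t ht s hs
    rw [uIoc_of_le ht] at hs
    simp only [hv, concatInput, if_neg (show ¬ s + τ ≤ τ by linarith [hs.1]), add_sub_cancel_right]
  have hint2 : ∀ t, 0 ≤ t → IntervalIntegrable (fun s => f (x s ξ v) (v s)) volume τ (t + τ) :=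
    fun t ht => (hint hτ).symm.trans (hint (by positivity))
  refine hB.eq_of_integral_equation hf (z := fun s => x (s + τ) ξ v) hu hc ht ?_ ?_ fun t ht => ?_
  · exact hcont.comp (by fun_prop) fun s hs => add_nonneg hs.1 hτ
  · have := (hint2 t ht).comp_add_right τ
    simp only [sub_self, add_sub_cancel_right] at this
    exact this.congr (hcg t ht)
  · have h1 := intervalIntegral.integral_comp_add_right (a := 0) (b := t)
      (fun s => f (x s ξ v) (v s)) τ
    rw [← intervalIntegral.integral_congr_ae (ae_of_all _ fun s hs => hcg t ht.1 hs), h1, zero_add,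
      hB.1 ξ v hvI _ (add_nonneg ht.1 hτ), hB.1 ξ v hvI _ hτ, add_assoc,
      intervalIntegral.integral_add_adjacent_intervals (hint hτ) (hint2 t ht.1)]

lemma IsBIBS.norm_sub_le
    (hf : LocallyLipschitz fun q : EuclideanSpace ℝ (Fin n) × EuclideanSpace ℝ (Fin m) =>
      f q.1 q.2) (hB : IsBIBS f x) (R c : ℝ) :
    ∃ M : ℝ, 0 ≤ M ∧ ∀ ξ ξ' u, ‖ξ‖ ≤ R → ‖ξ'‖ ≤ R → Measurable u → (∀ s, ‖u s‖ ≤ c) →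
      ∀ t, 0 ≤ t → ‖x t ξ u - x t ξ' u‖ ≤ ‖ξ - ξ'‖ * Real.exp (M * t) := by
  obtain ⟨σ, hσK, hσ⟩ := hB.2
  obtain ⟨M, hM, hL⟩ := exists_lipschitz_bound hf (max (σ R) (σ c)) c
  refine ⟨M, hM, fun ξ ξ' u hξ hξ' hu hc t ht => ?_⟩
  have hu' := isInput_of_norm_le hu hc
  have hb := bddInput_of_norm_le hc
  have hbd : ∀ ξ, ‖ξ‖ ≤ R → ∀ t, 0 ≤ t → ‖x t ξ u‖ ≤ max (σ R) (σ c) := fun ξ hξ t ht =>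
    (hσ ξ u hu' hb t ht).trans (max_le_max (hσK.mono (norm_nonneg _) hξ)
      (hσK.mono uNorm_nonneg (uNorm_le hc)))
  exact norm_sub_le_of_integral_equation (T := t) hM
    ((hB.continuousOn hf hu' hb ξ).mono Icc_subset_Ici_self)
    ((hB.continuousOn hf hu' hb ξ').mono Icc_subset_Ici_self)
    (hB.intervalIntegrable hf hu' hb ξ ht) (hB.intervalIntegrable hf hu' hb ξ' ht)
    (fun t ht => hB.1 ξ u hu' t ht.1) (fun t ht => hB.1 ξ' u hu' t ht.1)
    (fun t ht => hL _ _ _ (hbd ξ hξ t ht.1) (hbd ξ' hξ' t ht.1) (hc t)) ⟨ht, le_rfl⟩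

end Concatenation

/-! ### A Lyapunov function implies SIIOS -/

section Sufficiency

variable {n m p : ℕ}
  {f : EuclideanSpace ℝ (Fin n) → EuclideanSpace ℝ (Fin m) → EuclideanSpace ℝ (Fin n)}
  {h : EuclideanSpace ℝ (Fin n) → EuclideanSpace ℝ (Fin p)}
  {x : ℝ → EuclideanSpace ℝ (Fin n) → (ℝ → EuclideanSpace ℝ (Fin m)) → EuclideanSpace ℝ (Fin n)}
  {u : ℝ → EuclideanSpace ℝ (Fin m)}

/-- Integration of a differential inequality along a trajectory. -/
lemma IsBIBS.sub_le_of_fderiv_le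
    (hf : LocallyLipschitz fun q : EuclideanSpace ℝ (Fin n) × EuclideanSpace ℝ (Fin m) =>
      f q.1 q.2) (hB : IsBIBS f x)
    {V : EuclideanSpace ℝ (Fin n) → ℝ} (hV : ContDiff ℝ 1 V)
    (hu : IsInput u) (hb : BddInput u) (ξ : EuclideanSpace ℝ (Fin n)) {a b q : ℝ} (ha : 0 ≤ a)
    (hab : a ≤ b)
    (hq : ∀ᵐ s, s ∈ Ioo a b → fderiv ℝ V (x s ξ u) (f (x s ξ u) (u s)) ≤ -q) :
    V (x b ξ u) - V (x a ξ u) ≤ -(q * (b - a)) := by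
  obtain ⟨σ, -, hσ⟩ := hB.2
  set S := max (σ ‖ξ‖) (σ (uNorm u)) with hS
  obtain ⟨B, hB0, hBd⟩ := exists_norm_bound hf S (uNorm u)
  set F : ℝ → EuclideanSpace ℝ (Fin n) := fun s => f (x s ξ u) (u s) with hF
  have hFB : ∀ᵐ s, s ∈ Ici (0:ℝ) → ‖F s‖ ≤ B := by
    filter_upwards [ae_imp_of_ae_restrict hb.ae_norm_le] with s hs hs0
    exact hBd _ _ (hσ ξ u hu hb s hs0) (hs hs0)
  have hint := fun t ht => hB.intervalIntegrable hf hu hb ξ (t := t) ht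
  have hzLip : LipschitzOnWith B.toNNReal (fun s => x s ξ u) (uIcc a b) := by
    refine LipschitzOnWith.of_dist_le_mul fun s hs t ht => ?_
    rw [uIcc_of_le hab] at hs ht
    have hs0 := ha.trans hs.1
    have ht0 := ha.trans ht.1
    rw [dist_eq_norm, hB.1 ξ u hu s hs0, hB.1 ξ u hu t ht0, add_sub_add_left_eq_sub,
      intervalIntegral.integral_interval_sub_left (hint s hs0) (hint t ht0),
      Real.coe_toNNReal B hB0, Real.dist_eq]
    refine intervalIntegral.norm_integral_le_of_norm_le_const_ae ?_
    filter_upwards [hFB] with r hr hrm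
    exact hr ((le_min ht0 hs0).trans hrm.1.le)
  obtain ⟨K, hK⟩ := (hV.locallyLipschitz.locallyLipschitzOn
    (s := Metric.closedBall 0 S)).exists_lipschitzOnWith_of_compact (isCompact_closedBall _ _)
  have hac := (hK.comp hzLip fun s hs => by
    rw [uIcc_of_le hab] at hs
    exact mem_closedBall_zero_iff.2 (hσ ξ u hu hb s (ha.trans hs.1))).absolutelyContinuousOnInterval
  have hFTC := hac.integral_deriv_eq_sub
  simp only [Function.comp_apply] at hFTC
  rw [← hFTC]
  have hmono : ∫ s in a..b, deriv (V ∘ fun s => x s ξ u) s ≤ ∫ s in a..b, (-q : ℝ) := by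
    refine intervalIntegral.integral_mono_ae_restrict hab hac.intervalIntegrable_deriv (by simp) ?_
    rw [EventuallyLE, ae_restrict_iff' measurableSet_Icc]
    have h1 : ∀ᵐ s : ℝ, s ≠ a := by simp [ae_iff]
    have h2 : ∀ᵐ s : ℝ, s ≠ b := by simp [ae_iff]
    filter_upwards [hq, (hint b (ha.trans hab)).ae_hasDerivAt_integral, h1, h2]
      with s hs hd hsa hsb hsm
    have hlt : a < s := lt_of_le_of_ne hsm.1 (Ne.symm hsa)
    have hd' := hd (by rw [uIcc_of_le (ha.trans hab)]; exact ⟨ha.trans hsm.1, hsm.2⟩) 0 left_mem_uIcc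
    have hz : HasDerivAt (fun s => x s ξ u) (F s) s := by
      refine (hd'.const_add ξ).congr_of_eventuallyEq ?_
      filter_upwards [Ioi_mem_nhds (ha.trans_lt hlt)] with r hr
      exact hB.1 ξ u hu r (mem_Ici.2 (le_of_lt hr))
    have hVd := ((hV.differentiable one_ne_zero) (x s ξ u)).hasFDerivAt.comp_hasDerivAt s hz
    rw [hVd.deriv]
    exact hs ⟨hlt, lt_of_le_of_ne hsm.2 hsb⟩
  refine hmono.trans (le_of_eq ?_)
  rw [intervalIntegral.integral_const, smul_eq_mul]; ring

/-- The decay estimate along trajectories, outside the region dominated by the input. -/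
lemma IsBIBS.decay_of_lyapunov
    (hf : LocallyLipschitz fun q : EuclideanSpace ℝ (Fin n) × EuclideanSpace ℝ (Fin m) =>
      f q.1 q.2) (hB : IsBIBS f x)
    {V : EuclideanSpace ℝ (Fin n) → ℝ} (hV : ContDiff ℝ 1 V)
    {χ α₃ : ℝ → ℝ} (hχ : IsClassK χ) (hα₃ : IsClassK α₃)
    (hdec : ∀ ξ μ, χ ‖μ‖ ≤ V ξ → fderiv ℝ V ξ (f ξ μ) ≤ -α₃ (V ξ))
    (hu : IsInput u) (hb : BddInput u) (ξ : EuclideanSpace ℝ (Fin n)) {t : ℝ} (ht : 0 ≤ t)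
    (hlt : χ (uNorm u) < V (x t ξ u)) :
    V (x t ξ u) + t * α₃ (V (x t ξ u)) ≤ V ξ := by
  set v : ℝ → ℝ := fun s => V (x s ξ u) with hv
  have hvc : ContinuousOn v (Ici 0) :=
    hV.continuous.comp_continuousOn (hB.continuousOn hf hu hb ξ)
  have hstep : ∀ a b k, 0 ≤ a → a ≤ b → χ (uNorm u) ≤ k → (∀ s ∈ Ioo a b, k ≤ v s) →
      v b - v a ≤ -(α₃ k * (b - a)) := by
    intro a b k ha hab hck hk
    have hk0 : 0 ≤ k := (hχ.nonneg uNorm_nonneg).trans hck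
    refine hB.sub_le_of_fderiv_le hf hV hu hb ξ ha hab ?_
    filter_upwards [ae_imp_of_ae_restrict hb.ae_norm_le] with s hs hsm
    have h1 := hdec (x s ξ u) (u s) (((hχ.mono (norm_nonneg _) (hs (ha.trans hsm.1.le))).trans
      hck).trans (hk s hsm))
    exact h1.trans (neg_le_neg (hα₃.mono hk0 (hk s hsm)))
  have hge : ∀ s ∈ Icc 0 t, v t ≤ v s := by
    intro s hs
    by_contra! hcon
    obtain ⟨k, hk1, hk2⟩ := exists_between (max_lt hlt hcon)
    have hk : χ (uNorm u) < k ∧ v s < k := max_lt_iff.1 hk1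
    set A : Set ℝ := {r ∈ Icc s t | v r ≤ k} with hA
    have hAc : IsCompact A := by
      have hvc' : ContinuousOn v (Icc s t) := hvc.mono fun r hr => hs.1.trans hr.1
      have hcl : IsClosed A := hvc'.preimage_isClosed_of_isClosed isClosed_Icc (isClosed_Iic (a := k))
      exact isCompact_Icc.of_isClosed_subset hcl fun r hr => hr.1
    obtain ⟨a, haA, hmax⟩ := hAc.exists_isGreatest ⟨s, ⟨le_rfl, hs.2⟩, hk.2.le⟩
    have := hstep a t k (hs.1.trans haA.1.1) haA.1.2 hk.1.le fun r hr => by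
      by_contra! hrk
      exact absurd (hmax ⟨⟨haA.1.1.trans hr.1.le, hr.2.le⟩, hrk.le⟩) (not_le.2 hr.1)
    have h3 : 0 ≤ α₃ k * (t - a) := mul_nonneg
      (hα₃.nonneg ((hχ.nonneg uNorm_nonneg).trans hk.1.le)) (sub_nonneg.2 haA.1.2)
    have h4 : v a ≤ k := haA.2
    have h5 : k < v t := hk2
    linarith
  have := hstep 0 t (v t) le_rfl ht hlt.le fun s hs => hge s ⟨hs.1.le, hs.2.le⟩
  have h0 : v 0 = V ξ := by simp only [hv, hB.apply_zero hu]
  rw [h0] at this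
  change v t + t * α₃ (v t) ≤ V ξ
  linarith

lemma IsSIIOSLyapunov.isSIIOS
    (hf : LocallyLipschitz fun q : EuclideanSpace ℝ (Fin n) × EuclideanSpace ℝ (Fin m) =>
      f q.1 q.2) (hB : IsBIBS f x)
    {V : EuclideanSpace ℝ (Fin n) → ℝ} (hL : IsSIIOSLyapunov f h V) : IsSIIOS h x := by
  obtain ⟨hV, hV0, ⟨α₁, α₂, hα₁, hα₂, hsand⟩, χ, α₃, hχ, hα₃, hdec⟩ := hL
  obtain ⟨e₁, he₁0, he₁⟩ := hα₁.exists_orderIso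
  obtain ⟨e₂, he₂0, he₂⟩ := hα₂.exists_orderIso
  have hφ : ∀ t : ℝ, ∃ e : ℝ ≃o ℝ, e 0 = 0 ∧ (0 ≤ t → ∀ s, 0 ≤ s → e s = s + t * α₃ s) := by
    intro t
    by_cases ht : 0 ≤ t
    · have : IsClassKInfty fun s => s + t * α₃ s := by
        refine ⟨⟨continuousOn_id.add (continuousOn_const.mul hα₃.1), fun a ha b hb hab =>
          add_lt_add_of_lt_of_le hab (mul_le_mul_of_nonneg_left (hα₃.mono ha hab.le) ht),
          by simp [hα₃.2.2]⟩, ?_⟩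
        refine tendsto_atTop_mono' _ ?_ tendsto_id
        filter_upwards [eventually_ge_atTop 0] with s hs
        exact le_add_of_nonneg_right (mul_nonneg ht (hα₃.nonneg hs))
      obtain ⟨e, h0, he⟩ := this.exists_orderIso
      exact ⟨e, h0, fun _ => he⟩
    · exact ⟨OrderIso.refl ℝ, rfl, fun h => absurd h ht⟩
  choose φ hφ0 hφe using hφ
  have hr0 : ∀ t s, 0 ≤ s → 0 ≤ (φ t).symm (e₂ s) := fun t s hs => by
    rw [OrderIso.le_symm_apply, hφ0, ← he₂0]; exact e₂.monotone hs
  have heq : ∀ t s, 0 ≤ t → 0 ≤ s →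
      (φ t).symm (e₂ s) + t * α₃ ((φ t).symm (e₂ s)) = e₂ s := fun t s ht hs => by
    rw [← hφe t ht _ (hr0 t s hs), OrderIso.apply_symm_apply]
  refine ⟨fun s t => e₁.symm ((φ t).symm (e₂ s)), fun s => e₁.symm (χ s), ⟨?_, ?_⟩, ?_, ?_⟩
  · intro t _
    exact (OrderIso.isClassKInfty ((e₂.trans (φ t).symm).trans e₁.symm) (by
      simp [he₂0, (φ t).symm_zero (hφ0 t), e₁.symm_zero he₁0])).1
  · intro s hs
    have hs : 0 ≤ s := hs
    refine ⟨fun t ht t' ht' htt' => e₁.symm.monotone ?_, ?_⟩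
    · rw [OrderIso.le_symm_apply, hφe t ht _ (hr0 t' s hs)]
      refine le_trans ?_ (heq t' s ht' hs).le
      exact add_le_add le_rfl (mul_le_mul_of_nonneg_right htt' (hα₃.nonneg (hr0 t' s hs)))
    · have h1 : Tendsto (fun t => (φ t).symm (e₂ s)) atTop (𝓝 0) := by
        rw [Metric.tendsto_atTop]
        intro ε hε
        refine ⟨e₂ s / α₃ ε + 1, fun t ht => ?_⟩
        have hα := hα₃.pos hε
        have he0 : 0 ≤ e₂ s := by rw [← he₂0]; exact e₂.monotone hs
        have ht0 : 0 ≤ t := by have : 0 ≤ e₂ s / α₃ ε := by positivity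
                               linarith
        rw [Real.dist_eq, sub_zero, abs_of_nonneg (hr0 t s hs)]
        by_contra! hcon
        have h2 := heq t s ht0 hs
        have h3 := mul_le_mul_of_nonneg_left (hα₃.mono hε.le hcon) ht0
        have h4 : e₂ s < t * α₃ ε := by rw [← div_lt_iff₀ hα]; linarith
        linarith
      have h2 := (e₁.symm.continuous.tendsto 0).comp h1
      rwa [e₁.symm_zero he₁0] at h2
  · exact ⟨e₁.symm.continuous.comp_continuousOn hχ.1, e₁.symm.strictMono.comp_strictMonoOn hχ.2.1,
      by simp [hχ.2.2, e₁.symm_zero he₁0]⟩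
  · intro ξ u hu hb t ht
    have hle : e₁ ‖h (x t ξ u)‖ ≤ V (x t ξ u) := by
      rw [he₁ _ (norm_nonneg _)]; exact (hsand _).1
    rcases le_or_gt (V (x t ξ u)) (χ (uNorm u)) with hc | hc
    · refine le_max_of_le_right ?_
      rw [OrderIso.le_symm_apply]
      exact hle.trans hc
    · refine le_max_of_le_left ?_
      have := hB.decay_of_lyapunov hf (hV.of_le (by exact_mod_cast le_top)) hχ hα₃ hdec hu hb ξ ht hc
      rw [OrderIso.le_symm_apply, OrderIso.le_symm_apply]
      refine ((φ t).monotone hle).trans ?_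
      rw [hφe t ht _ (hV0 _), he₂ _ (norm_nonneg _)]
      exact this.trans (hsand ξ).2

end Sufficiency

/-! ### A non-smooth Lyapunov function for an SIIOS system -/

section OpenLoop

variable {n m p : ℕ}
  {f : EuclideanSpace ℝ (Fin n) → EuclideanSpace ℝ (Fin m) → EuclideanSpace ℝ (Fin n)}
  {h : EuclideanSpace ℝ (Fin n) → EuclideanSpace ℝ (Fin p)}
  {x : ℝ → EuclideanSpace ℝ (Fin n) → (ℝ → EuclideanSpace ℝ (Fin m)) → EuclideanSpace ℝ (Fin n)}
  {β : ℝ → ℝ → ℝ} {g : ℝ ≃o ℝ}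

/-- The data of an SIIOS system, with the gain replaced by a bound `g a` on the inputs that
contribute at most `a` to the output. -/
structure SIIOSEstimate
    (f : EuclideanSpace ℝ (Fin n) → EuclideanSpace ℝ (Fin m) → EuclideanSpace ℝ (Fin n))
    (h : EuclideanSpace ℝ (Fin n) → EuclideanSpace ℝ (Fin p))
    (x : ℝ → EuclideanSpace ℝ (Fin n) → (ℝ → EuclideanSpace ℝ (Fin m)) →
      EuclideanSpace ℝ (Fin n)) (β : ℝ → ℝ → ℝ) (g : ℝ ≃o ℝ) : Prop where
  lipschitz_f : LocallyLipschitz fun q : EuclideanSpace ℝ (Fin n) × EuclideanSpace ℝ (Fin m) =>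
    f q.1 q.2
  lipschitz_h : LocallyLipschitz h
  bibs : IsBIBS f x
  classKL : IsClassKL β
  map_zero : g 0 = 0
  bound : ∀ ξ u a t, 0 ≤ a → 0 ≤ t → Measurable u → (∀ s, ‖u s‖ ≤ g a) →
    ‖h (x t ξ u)‖ ≤ max (β ‖h ξ‖ t) a

/-- The reward of the input `u` of level `a` at time `t`. -/
def reward (h : EuclideanSpace ℝ (Fin n) → EuclideanSpace ℝ (Fin p))
    (x : ℝ → EuclideanSpace ℝ (Fin n) → (ℝ → EuclideanSpace ℝ (Fin m)) →
      EuclideanSpace ℝ (Fin n)) (ξ : EuclideanSpace ℝ (Fin n)) (a t : ℝ)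
    (u : ℝ → EuclideanSpace ℝ (Fin m)) : ℝ :=
  (2 - Real.exp (-t)) * min a (‖h (x t ξ u)‖ - a)

/-- The set of rewards achievable from `ξ`. -/
def rewardSet (h : EuclideanSpace ℝ (Fin n) → EuclideanSpace ℝ (Fin p))
    (x : ℝ → EuclideanSpace ℝ (Fin n) → (ℝ → EuclideanSpace ℝ (Fin m)) →
      EuclideanSpace ℝ (Fin n)) (g : ℝ ≃o ℝ) (ξ : EuclideanSpace ℝ (Fin n)) : Set ℝ :=
  {r | ∃ a t u, 0 ≤ a ∧ 0 ≤ t ∧ Measurable u ∧ (∀ s, ‖u s‖ ≤ g a) ∧ reward h x ξ a t u = r}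

/-- The open-loop value function. -/
def openLoopValue (h : EuclideanSpace ℝ (Fin n) → EuclideanSpace ℝ (Fin p))
    (x : ℝ → EuclideanSpace ℝ (Fin n) → (ℝ → EuclideanSpace ℝ (Fin m)) →
      EuclideanSpace ℝ (Fin n)) (g : ℝ ≃o ℝ) (ξ : EuclideanSpace ℝ (Fin n)) : ℝ :=
  sSup (rewardSet h x g ξ)

lemma IsClassKL.mono_left (hβ : IsClassKL β) {r s t : ℝ} (hr : 0 ≤ r) (hrs : r ≤ s) (ht : 0 ≤ t) :
    β r t ≤ β s t := (hβ.1 t ht).mono hr hrs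

lemma IsClassKL.anti_right (hβ : IsClassKL β) {r s t : ℝ} (hr : 0 ≤ r) (hs : 0 ≤ s)
    (hst : s ≤ t) : β r t ≤ β r s := (hβ.2 r hr).1 hs (mem_Ici.2 (hs.trans hst)) hst

lemma IsClassKL.exists_le (hβ : IsClassKL β) {r v : ℝ} (hr : 0 ≤ r) (hv : 0 < v) :
    ∃ T, 0 ≤ T ∧ ∀ s t, 0 ≤ s → s ≤ r → T ≤ t → β s t ≤ v := by
  have h1 := ((hβ.2 r hr).2.eventually (eventually_le_nhds hv)).and (eventually_ge_atTop 0)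
  obtain ⟨T, hT, hT0⟩ := h1.exists
  exact ⟨T, hT0, fun s t hs hsr ht => (hβ.mono_left hs hsr (hT0.trans ht)).trans
    ((hβ.anti_right hr hT0 ht).trans hT)⟩

/-- Consequences of a reward being larger than `v`. -/
lemma SIIOSEstimate.of_lt_reward (H : SIIOSEstimate f h x β g) {ξ : EuclideanSpace ℝ (Fin n)}
    {a t v : ℝ} {u : ℝ → EuclideanSpace ℝ (Fin m)} (ha : 0 ≤ a) (ht : 0 ≤ t) (hu : Measurable u)
    (hua : ∀ s, ‖u s‖ ≤ g a) (hv : 0 ≤ v) (hlt : v < reward h x ξ a t u) :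
    v / 2 < min a (‖h (x t ξ u)‖ - a) ∧ ‖h (x t ξ u)‖ ≤ β ‖h ξ‖ t := by
  have he : 0 < Real.exp (-t) := Real.exp_pos _
  have he1 : Real.exp (-t) ≤ 1 := Real.exp_le_one_iff.2 (by linarith)
  unfold reward at hlt
  set k := min a (‖h (x t ξ u)‖ - a) with hk
  have hk0 : 0 < k := by
    by_contra! hcon
    nlinarith
  have h1 : v / 2 < k := by nlinarith
  refine ⟨h1, ?_⟩
  have h2 : k ≤ ‖h (x t ξ u)‖ - a := min_le_right _ _
  rcases le_max_iff.1 (H.bound ξ u a t ha ht hu hua) with h3 | h3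
  · exact h3
  · linarith

lemma SIIOSEstimate.reward_le (H : SIIOSEstimate f h x β g) {ξ : EuclideanSpace ℝ (Fin n)}
    {a t : ℝ} {u : ℝ → EuclideanSpace ℝ (Fin m)} (ha : 0 ≤ a) (ht : 0 ≤ t) (hu : Measurable u)
    (hua : ∀ s, ‖u s‖ ≤ g a) : reward h x ξ a t u ≤ β ‖h ξ‖ 0 := by
  by_contra! hcon
  have hβ0 : 0 ≤ β ‖h ξ‖ 0 := (H.classKL.1 0 self_mem_Ici).nonneg (norm_nonneg _)
  obtain ⟨h1, h2⟩ := H.of_lt_reward ha ht hu hua hβ0 hcon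
  have h3 := H.classKL.anti_right (norm_nonneg (h ξ)) le_rfl ht
  have h4 := lt_min_iff.1 h1
  linarith [h4.1, h4.2]

lemma SIIOSEstimate.bddAbove (H : SIIOSEstimate f h x β g) (ξ : EuclideanSpace ℝ (Fin n)) :
    BddAbove (rewardSet h x g ξ) := by
  refine ⟨β ‖h ξ‖ 0, ?_⟩
  rintro _ ⟨a, t, u, ha, ht, hu, hua, rfl⟩
  exact H.reward_le ha ht hu hua

lemma SIIOSEstimate.reward_le_value (H : SIIOSEstimate f h x β g) {ξ : EuclideanSpace ℝ (Fin n)}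
    {a t : ℝ} {u : ℝ → EuclideanSpace ℝ (Fin m)} (ha : 0 ≤ a) (ht : 0 ≤ t) (hu : Measurable u)
    (hua : ∀ s, ‖u s‖ ≤ g a) : reward h x ξ a t u ≤ openLoopValue h x g ξ :=
  le_csSup (H.bddAbove ξ) ⟨a, t, u, ha, ht, hu, hua, rfl⟩

lemma SIIOSEstimate.half_norm_le (H : SIIOSEstimate f h x β g) (ξ : EuclideanSpace ℝ (Fin n)) :
    ‖h ξ‖ / 2 ≤ openLoopValue h x g ξ := by
  have h0 : ∀ s : ℝ, ‖(fun _ => 0 : ℝ → EuclideanSpace ℝ (Fin m)) s‖ ≤ g (‖h ξ‖ / 2) := fun s => by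
    rw [norm_zero, ← H.map_zero]; exact g.monotone (by positivity)
  have := H.reward_le_value (ξ := ξ) (by positivity) le_rfl measurable_const h0
  rw [reward, H.bibs.apply_zero (isInput_of_norm_le measurable_const h0)] at this
  norm_num at this
  linarith

lemma SIIOSEstimate.value_nonneg (H : SIIOSEstimate f h x β g) (ξ : EuclideanSpace ℝ (Fin n)) :
    0 ≤ openLoopValue h x g ξ := le_trans (by positivity) (H.half_norm_le ξ)

lemma SIIOSEstimate.rewardSet_nonempty (H : SIIOSEstimate f h x β g)
    (ξ : EuclideanSpace ℝ (Fin n)) : (rewardSet h x g ξ).Nonempty :=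
  ⟨_, 0, 0, fun _ => 0, le_rfl, le_rfl, measurable_const, fun _ => by rw [norm_zero, H.map_zero],
    rfl⟩

lemma SIIOSEstimate.value_le (H : SIIOSEstimate f h x β g) (ξ : EuclideanSpace ℝ (Fin n)) :
    openLoopValue h x g ξ ≤ β ‖h ξ‖ 0 := by
  refine csSup_le (H.rewardSet_nonempty ξ) ?_
  rintro _ ⟨a, t, u, ha, ht, hu, hua, rfl⟩
  exact H.reward_le ha ht hu hua

/-- Decay of the open-loop value along constant inputs. -/
lemma SIIOSEstimate.value_decay (H : SIIOSEstimate f h x β g) {ε r : ℝ} (hε : 0 < ε)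
    (hr : 0 ≤ r) :
    ∃ q, 0 < q ∧ ∀ ξ, openLoopValue h x g ξ ≤ r → ∀ v, ε ≤ v → ∀ μ, ‖μ‖ ≤ g (v / 2) →
      ∀ τ, 0 ≤ τ →
        openLoopValue h x g (x τ ξ fun _ => μ) ≤ max v (openLoopValue h x g ξ - q * τ) := by
  obtain ⟨T, hT0, hT⟩ := H.classKL.exists_le (r := 2 * r) (by positivity) (half_pos hε)
  refine ⟨Real.exp (-T) * (ε / 2), by positivity, fun ξ hξ v hv μ hμ τ hτ => ?_⟩
  refine csSup_le (H.rewardSet_nonempty _) ?_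
  rintro _ ⟨a, t, u, ha, ht, hu, hua, rfl⟩
  by_contra! hcon
  obtain ⟨hcon1, hcon2⟩ := max_lt_iff.1 hcon
  obtain ⟨hk, -⟩ := H.of_lt_reward ha ht hu hua (hε.le.trans hv) hcon1
  have hva : v / 2 ≤ a := (hk.trans_le (min_le_left _ _)).le
  have hμa : ‖μ‖ ≤ g a := hμ.trans (g.monotone hva)
  have hconcat := H.bibs.concat H.lipschitz_f hu hμa hua hτ ht ξ
  have hcm : Measurable (concatInput τ μ u) := measurable_concatInput hu
  have hcb := norm_concatInput_le (τ := τ) hμa hua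
  have hval := H.reward_le_value (ξ := ξ) ha (add_nonneg ht hτ) hcm hcb
  have hrew : reward h x ξ a (t + τ) (concatInput τ μ u) =
      (2 - Real.exp (-(t + τ))) * min a (‖h (x t (x τ ξ fun _ => μ) u)‖ - a) := by
    rw [reward, hconcat]
  have hb := H.bound ξ _ a (t + τ) ha (add_nonneg ht hτ) hcm hcb
  rw [hconcat] at hb
  rw [hrew] at hval
  unfold reward at hcon2
  set y := ‖h (x t (x τ ξ fun _ => μ) u)‖ with hy
  set k := min a (y - a) with hkdef
  have hk1 : k ≤ a := min_le_left _ _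
  have hk2 : k ≤ y - a := min_le_right _ _
  have htT : t + τ < T := by
    by_contra! hge
    have h1 := hT ‖h ξ‖ (t + τ) (norm_nonneg _) (by linarith [H.half_norm_le ξ]) hge
    rcases le_max_iff.1 hb with h2 | h2 <;> linarith
  have hexp : Real.exp (-(t + τ)) * (1 + τ) ≤ Real.exp (-t) := by
    have : Real.exp (-t) = Real.exp (-(t + τ)) * Real.exp τ := by rw [← Real.exp_add]; ring_nf
    rw [this]
    exact mul_le_mul_of_nonneg_left (by linarith [Real.add_one_le_exp τ]) (Real.exp_pos _).le
  have hexp2 : Real.exp (-T) ≤ Real.exp (-(t + τ)) := Real.exp_le_exp.2 (by linarith)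
  have h5 : Real.exp (-T) * τ ≤ Real.exp (-t) - Real.exp (-(t + τ)) := by
    nlinarith
  have h6 : Real.exp (-T) * τ * (ε / 2) ≤ (Real.exp (-t) - Real.exp (-(t + τ))) * k :=
    mul_le_mul h5 (by linarith) (by positivity) (le_trans (by positivity) h5)
  nlinarith

lemma LocallyLipschitz.exists_norm_sub_le {E F : Type*} [NormedAddCommGroup E] [ProperSpace E]
    [NormedAddCommGroup F] {φ : E → F} (hφ : LocallyLipschitz φ) (S : ℝ) :
    ∃ K : ℝ, 0 ≤ K ∧ ∀ a b, ‖a‖ ≤ S → ‖b‖ ≤ S → ‖φ a - φ b‖ ≤ K * ‖a - b‖ := by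
  obtain ⟨K, hK⟩ := (hφ.locallyLipschitzOn (s := Metric.closedBall 0 S)
    ).exists_lipschitzOnWith_of_compact (isCompact_closedBall _ _)
  refine ⟨K, K.2, fun a b ha hb => ?_⟩
  simpa [dist_eq_norm] using hK.dist_le_mul a (by simp [ha]) b (by simp [hb])

lemma Continuous.exists_norm_le_of_norm_le {E F : Type*} [NormedAddCommGroup E] [ProperSpace E]
    [NormedAddCommGroup F] {φ : E → F} (hφ : Continuous φ) (S : ℝ) :
    ∃ K : ℝ, 0 ≤ K ∧ ∀ a, ‖a‖ ≤ S → ‖φ a‖ ≤ K := by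
  obtain ⟨B, hB⟩ := (isCompact_closedBall (0 : E) S).exists_bound_of_continuousOn hφ.continuousOn
  exact ⟨max B 0, le_max_right _ _, fun a ha => (hB a (by simpa using ha)).trans (le_max_left _ _)⟩

/-- Local boundedness of the open-loop value. -/
lemma SIIOSEstimate.exists_value_le (H : SIIOSEstimate f h x β g) (R : ℝ) :
    ∃ A, 0 ≤ A ∧ ∀ ξ, ‖ξ‖ ≤ R → openLoopValue h x g ξ ≤ A := by
  obtain ⟨r, hr0, hr⟩ := H.lipschitz_h.continuous.exists_norm_le_of_norm_le R
  exact ⟨β r 0, (H.classKL.1 0 self_mem_Ici).nonneg hr0, fun ξ hξ =>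
    (H.value_le ξ).trans (H.classKL.mono_left (norm_nonneg _) (hr ξ hξ) le_rfl)⟩

/-- Away from zero, the open-loop value is locally Lipschitz. -/
lemma SIIOSEstimate.value_lipschitz (H : SIIOSEstimate f h x β g) (R : ℝ) {v : ℝ} (hv : 0 < v) :
    ∃ L, 0 ≤ L ∧ ∀ ξ ξ', ‖ξ‖ ≤ R → ‖ξ'‖ ≤ R → v < openLoopValue h x g ξ →
      openLoopValue h x g ξ - L * ‖ξ - ξ'‖ ≤ openLoopValue h x g ξ' := by
  obtain ⟨r, hr0, hr⟩ := H.lipschitz_h.continuous.exists_norm_le_of_norm_le R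
  obtain ⟨T, hT0, hT⟩ := H.classKL.exists_le hr0 (half_pos hv)
  obtain ⟨M, hM0, hM⟩ := H.bibs.norm_sub_le H.lipschitz_f R (g (β r 0))
  obtain ⟨σ, hσK, hσ⟩ := H.bibs.2
  obtain ⟨K, hK0, hK⟩ := H.lipschitz_h.exists_norm_sub_le (max (σ R) (σ (g (β r 0))))
  refine ⟨2 * (K * Real.exp (M * T)), by positivity, fun ξ ξ' hξ hξ' hlt => ?_⟩
  rw [sub_le_iff_le_add]
  refine le_of_forall_lt fun c hc => ?_
  obtain ⟨_, ⟨a, t, u, ha, ht, hu, hua, rfl⟩, hc'⟩ :=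
    exists_lt_of_lt_csSup (H.rewardSet_nonempty ξ) (max_lt hlt hc)
  obtain ⟨h1, h2⟩ := max_lt_iff.1 hc'
  obtain ⟨hk, hyβ⟩ := H.of_lt_reward ha ht hu hua hv.le h1
  have hk' := lt_min_iff.1 hk
  have hβ : β ‖h ξ‖ t ≤ β r 0 := (H.classKL.mono_left (norm_nonneg _) (hr ξ hξ) ht).trans
    (H.classKL.anti_right hr0 le_rfl ht)
  have haβ : a ≤ β r 0 := by linarith [hk'.2]
  have hub : ∀ s, ‖u s‖ ≤ g (β r 0) := fun s => (hua s).trans (g.monotone haβ)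
  have hu' := isInput_of_norm_le hu hub
  have hb := bddInput_of_norm_le hub
  have hbd : ∀ ξ, ‖ξ‖ ≤ R → ‖x t ξ u‖ ≤ max (σ R) (σ (g (β r 0))) := fun ξ hξ =>
    (hσ ξ u hu' hb t ht).trans (max_le_max (hσK.mono (norm_nonneg _) hξ)
      (hσK.mono uNorm_nonneg (uNorm_le hub)))
  have htT : t ≤ T := by
    by_contra! hge
    have := hT ‖h ξ‖ t (norm_nonneg _) (hr ξ hξ) hge.le
    linarith [hk'.1, hk'.2]
  have hd : |‖h (x t ξ u)‖ - ‖h (x t ξ' u)‖| ≤ K * Real.exp (M * T) * ‖ξ - ξ'‖ := by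
    refine (abs_norm_sub_norm_le _ _).trans ((hK _ _ (hbd ξ hξ) (hbd ξ' hξ')).trans ?_)
    rw [mul_assoc]
    refine mul_le_mul_of_nonneg_left ((hM ξ ξ' u hξ hξ' hu hub t ht).trans ?_) hK0
    rw [mul_comm]
    exact mul_le_mul_of_nonneg_right
      (Real.exp_le_exp.2 (mul_le_mul_of_nonneg_left htT hM0)) (norm_nonneg _)
  have hval := H.reward_le_value (ξ := ξ') ha ht hu hua
  unfold reward at h2 hval
  have hw0 : 0 ≤ 2 - Real.exp (-t) := by
    have : Real.exp (-t) ≤ 1 := Real.exp_le_one_iff.2 (by linarith)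
    linarith
  have hw2 : 2 - Real.exp (-t) ≤ 2 := by linarith [Real.exp_pos (-t)]
  set y := ‖h (x t ξ u)‖
  set y' := ‖h (x t ξ' u)‖
  set D := K * Real.exp (M * T) * ‖ξ - ξ'‖ with hD
  have hD0 : 0 ≤ D := (abs_nonneg _).trans hd
  have hmin : min a (y - a) - D ≤ min a (y' - a) := by
    refine le_min ?_ ?_
    · linarith [min_le_left a (y - a)]
    · linarith [min_le_right a (y - a), le_abs_self (y - y')]
  have h7 := mul_le_mul_of_nonneg_left hmin hw0
  have h8 := mul_le_mul_of_nonneg_right hw2 hD0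
  have h9 : 2 * (K * Real.exp (M * T)) * ‖ξ - ξ'‖ = 2 * D := by rw [hD]; ring
  rw [h9]
  nlinarith

lemma SIIOSEstimate.max_value_lipschitz (H : SIIOSEstimate f h x β g) (R : ℝ) {ε : ℝ}
    (hε : 0 < ε) :
    ∃ L, 0 ≤ L ∧ ∀ ξ ξ', ‖ξ‖ ≤ R → ‖ξ'‖ ≤ R →
      max (openLoopValue h x g ξ) ε ≤ max (openLoopValue h x g ξ') ε + L * ‖ξ - ξ'‖ := by
  obtain ⟨L, hL0, hL⟩ := H.value_lipschitz R (half_pos hε)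
  refine ⟨L, hL0, fun ξ ξ' hξ hξ' => max_le ?_ ?_⟩
  · by_cases hc : ε / 2 < openLoopValue h x g ξ
    · linarith [hL ξ ξ' hξ hξ' hc, le_max_left (openLoopValue h x g ξ') ε]
    · have : 0 ≤ L * ‖ξ - ξ'‖ := by positivity
      linarith [le_max_right (openLoopValue h x g ξ') ε]
  · have : 0 ≤ L * ‖ξ - ξ'‖ := by positivity
    linarith [le_max_right (openLoopValue h x g ξ') ε]

lemma SIIOSEstimate.continuous_max_value (H : SIIOSEstimate f h x β g) {ε : ℝ} (hε : 0 < ε) :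
    Continuous fun ξ => max (openLoopValue h x g ξ) ε := by
  rw [continuous_iff_continuousAt]
  intro ξ
  obtain ⟨L, hL0, hL⟩ := H.max_value_lipschitz (‖ξ‖ + 1) hε
  refine continuousAt_of_locally_lipschitz zero_lt_one L fun ξ' hξ' => ?_
  have h1 : ‖ξ'‖ ≤ ‖ξ‖ + 1 := by
    have := norm_le_norm_add_norm_sub' ξ' ξ
    rw [dist_eq_norm] at hξ'
    linarith
  have h2 : ‖ξ‖ ≤ ‖ξ‖ + 1 := by linarith
  have h3 := hL ξ ξ' h2 h1
  have h4 := hL ξ' ξ h1 h2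
  rw [norm_sub_rev] at h3
  rw [Real.dist_eq, dist_eq_norm, abs_le]
  constructor <;> linarith

/-- First-order expansion of the flow under constant inputs. -/
lemma IsBIBS.flow_expansion
    (hf : LocallyLipschitz fun q : EuclideanSpace ℝ (Fin n) × EuclideanSpace ℝ (Fin m) =>
      f q.1 q.2) (hB : IsBIBS f x) (R c : ℝ) :
    ∃ S M C, 0 ≤ M ∧ 0 ≤ C ∧ ∀ a y μ τ, ‖a‖ ≤ R → ‖y‖ ≤ R → ‖μ‖ ≤ c → 0 ≤ τ →
      ‖x τ y fun _ => μ‖ ≤ S ∧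
      ‖(y + τ • f a μ) - (x τ y fun _ => μ)‖ ≤ τ * (M * ‖a - y‖ + C * τ) ∧
      ‖f a μ‖ ≤ C := by
  obtain ⟨σ, hσK, hσ⟩ := hB.2
  set S := max R (max (σ R) (σ c)) with hS
  obtain ⟨M, hM0, hM⟩ := exists_lipschitz_bound hf S c
  obtain ⟨B, hB0, hBd⟩ := exists_norm_bound hf S c
  refine ⟨S, M, max B (M * B), hM0, le_max_of_le_left hB0, fun a y μ τ ha hy hμ hτ => ?_⟩
  have hub : ∀ s : ℝ, ‖(fun _ => μ : ℝ → EuclideanSpace ℝ (Fin m)) s‖ ≤ c := fun _ => hμ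
  have hu := isInput_of_norm_le measurable_const hub
  have hb := bddInput_of_norm_le hub
  have haS : ‖a‖ ≤ S := ha.trans (le_max_left _ _)
  have hyS : ‖y‖ ≤ S := hy.trans (le_max_left _ _)
  have hbd : ∀ t, 0 ≤ t → ‖x t y fun _ => μ‖ ≤ S := fun t ht =>
    ((hσ y _ hu hb t ht).trans (max_le_max (hσK.mono (norm_nonneg _) hy)
      (hσK.mono uNorm_nonneg (uNorm_le hub)))).trans (le_max_right _ _)
  have hint := hB.intervalIntegrable hf hu hb y hτ
  have hz : ∀ s, 0 ≤ s → ‖(x s y fun _ => μ) - y‖ ≤ B * s := by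
    intro s hs
    rw [hB.1 y _ hu s hs, add_sub_cancel_left]
    have := intervalIntegral.norm_integral_le_of_norm_le_const (a := 0) (b := s)
      (f := fun r => f (x r y fun _ => μ) μ) (C := B) fun r hr => by
        rw [uIoc_of_le hs] at hr
        exact hBd _ _ (hbd r hr.1.le) hμ
    rwa [sub_zero, abs_of_nonneg hs] at this
  refine ⟨hbd τ hτ, ?_, (hBd a μ haS hμ).trans (le_max_left _ _)⟩
  have e : (y + τ • f a μ) - (x τ y fun _ => μ) =
      ∫ s in (0:ℝ)..τ, (f a μ - f (x s y fun _ => μ) μ) := by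
    rw [intervalIntegral.integral_sub (by simp) hint, hB.1 y _ hu τ hτ,
      intervalIntegral.integral_const, sub_zero]
    abel
  rw [e]
  have := intervalIntegral.norm_integral_le_of_norm_le_const (a := 0) (b := τ)
      (f := fun s => f a μ - f (x s y fun _ => μ) μ) (C := M * ‖a - y‖ + max B (M * B) * τ)
      fun s hs => by
        rw [uIoc_of_le hτ] at hs
        refine (hM _ _ _ haS (hbd s hs.1.le) hμ).trans ?_
        have h1 : ‖a - x s y fun _ => μ‖ ≤ ‖a - y‖ + B * τ := by
          rw [show (a - x s y fun _ => μ) = (a - y) - ((x s y fun _ => μ) - y) by abel]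
          refine (_root_.norm_sub_le _ _).trans (add_le_add le_rfl ((hz s hs.1.le).trans ?_))
          exact mul_le_mul_of_nonneg_left hs.2 hB0
        have h2 := mul_le_mul_of_nonneg_left h1 hM0
        have h3 := mul_le_mul_of_nonneg_right (le_max_right B (M * B)) hτ
        linarith
  rw [sub_zero, abs_of_nonneg hτ, mul_comm] at this
  exact this

/-- Uniform decrease of the truncated open-loop value in frozen directions. -/
lemma SIIOSEstimate.frozen_decrease (H : SIIOSEstimate f h x β g) {ε : ℝ} (hε : 0 < ε) :
    ∃ Q : ℕ → ℝ, (∀ k, 0 < Q k) ∧ ∀ N : ℕ, ∃ r, 0 < r ∧ ∀ a μ, ‖a‖ ≤ N →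
      3 * ε ≤ openLoopValue h x g a → ‖μ‖ ≤ g (openLoopValue h x g a / 4) →
      ∃ τ₀, 0 < τ₀ ∧ ∀ y ∈ Metric.closedBall a r, ∀ τ ∈ Ioo 0 τ₀,
        max (openLoopValue h x g (y + τ • f a μ)) ε ≤
          max (openLoopValue h x g y) ε - τ * Q ⌈openLoopValue h x g a⌉₊ := by
  choose q hq0 hq using fun k : ℕ => H.value_decay (r := 2 * k) hε (by positivity)
  refine ⟨fun k => q k / 2, fun k => half_pos (hq0 k), fun N => ?_⟩
  obtain ⟨A, hA0, hA⟩ := H.exists_value_le N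
  obtain ⟨S, M, C, hM0, hC0, hflow⟩ := H.bibs.flow_expansion H.lipschitz_f (N + 1) (g (A / 4))
  obtain ⟨L, hL0, hL⟩ := H.max_value_lipschitz (max S (N + 2)) hε
  obtain ⟨j, -, hj⟩ := Finset.exists_min_image (Finset.range (⌈A⌉₊ + 1)) q ⟨0, by simp⟩
  set qm := q j with hqm
  have hqm0 : 0 < qm := hq0 j
  set r := min 1 (min (ε / (2 * (L + 1))) (qm / (4 * (L * M + 1)))) with hr
  have hr1 : r ≤ 1 := min_le_left _ _
  have hr2 : r ≤ ε / (2 * (L + 1)) := (min_le_right _ _).trans (min_le_left _ _)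
  have hr3 : r ≤ qm / (4 * (L * M + 1)) := (min_le_right _ _).trans (min_le_right _ _)
  have hLM : 0 ≤ L * M := by positivity
  have hr0 : 0 < r := by positivity
  rw [le_div_iff₀ (by positivity)] at hr2 hr3
  refine ⟨r, hr0, fun a μ ha h3 hμ => ?_⟩
  have hVA := hA a ha
  set v₀ := openLoopValue h x g a with hv₀
  set k := ⌈v₀⌉₊ with hk
  have hkv : v₀ ≤ k := Nat.le_ceil _
  have hqk : qm ≤ q k := hj k (by
    rw [Finset.mem_range]; exact Nat.lt_succ_of_le (Nat.ceil_le_ceil hVA))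
  set τ₀ := min (1 / (C + 1)) (min (ε / q k) (qm / (4 * (L * C + 1)))) with hτ₀
  have hLC : 0 ≤ L * C := by positivity
  have hqk0 := hq0 k
  refine ⟨τ₀, by positivity, fun y hy τ hτ => ?_⟩
  have hτ0 : 0 < τ := hτ.1
  have hτ1 : τ ≤ 1 / (C + 1) := hτ.2.le.trans (min_le_left _ _)
  have hτ2 : τ ≤ ε / q k := hτ.2.le.trans ((min_le_right _ _).trans (min_le_left _ _))
  have hτ3 : τ ≤ qm / (4 * (L * C + 1)) :=
    hτ.2.le.trans ((min_le_right _ _).trans (min_le_right _ _))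
  rw [le_div_iff₀ (by positivity)] at hτ1 hτ2 hτ3
  have hya : ‖a - y‖ ≤ r := by rw [← dist_eq_norm, dist_comm]; exact hy
  have hyN : ‖y‖ ≤ N + 1 := by
    have := norm_le_norm_add_norm_sub a y
    linarith
  have hμA : ‖μ‖ ≤ g (A / 4) := hμ.trans (g.monotone (by linarith))
  obtain ⟨hS, hexp, hfC⟩ := hflow a y μ τ (by linarith) hyN hμA hτ0.le
  have hNS : (N : ℝ) + 2 ≤ max S (N + 2) := le_max_right _ _
  have hLr : L * ‖a - y‖ ≤ ε / 2 := by nlinarith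
  have hW1 := hL a y (by linarith) (by linarith)
  have hW2 := hL y a (by linarith) (by linarith)
  rw [norm_sub_rev y a] at hW2
  rw [← hv₀, max_eq_left (a := v₀) (by linarith)] at hW1 hW2
  set v₁ := openLoopValue h x g y with hv₁
  have hv₁ε : ε < v₁ := by
    by_contra! hcon
    rw [max_eq_right hcon] at hW1
    linarith
  rw [max_eq_left hv₁ε.le] at hW1 hW2 ⊢
  have hdec := hq k y (by linarith) (v₀ / 2) (by linarith) μ
    (by rwa [div_div, show (2 : ℝ) * 2 = 4 by norm_num]) τ hτ0.le
  rw [max_eq_right (by linarith)] at hdec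
  have hstep : ‖(y + τ • f a μ)‖ ≤ N + 2 := by
    refine (norm_add_le _ _).trans ?_
    rw [norm_smul, Real.norm_of_nonneg hτ0.le]
    nlinarith
  have hfin := hL _ _ (hstep.trans hNS) (hS.trans (le_max_left _ _))
  have hWx : max (openLoopValue h x g (x τ y fun _ => μ)) ε ≤ v₁ - q k * τ :=
    max_le hdec (by linarith)
  have h10 := mul_le_mul_of_nonneg_left hexp hL0
  have h11 : M * ‖a - y‖ ≤ M * r := mul_le_mul_of_nonneg_left hya hM0
  have h12 : L * (M * ‖a - y‖ + C * τ) ≤ qm / 2 := by nlinarith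
  have h13 : L * (τ * (M * ‖a - y‖ + C * τ)) ≤ τ * (q k / 2) := by
    rw [mul_left_comm]
    exact mul_le_mul_of_nonneg_left (by linarith) hτ0.le
  linarith

end OpenLoop

open scoped ContDiff

/-! ### Smoothing -/

section Smoothing

variable {E : Type*} [NormedAddCommGroup E] [InnerProductSpace ℝ E]

/-- `W` decreases at rate `q` in the direction `v`, uniformly on the ball of radius `r` at `x`. -/
def DecreasesNear (W : E → ℝ) (x v : E) (r q : ℝ) : Prop :=
  ∃ τ₀, 0 < τ₀ ∧ ∀ y ∈ Metric.closedBall x r, ∀ τ ∈ Ioo 0 τ₀, W (y + τ • v) ≤ W y - τ * q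

lemma DecreasesNear.mono {W : E → ℝ} {x v : E} {r r' q : ℝ} (hW : DecreasesNear W x v r q)
    (hr : r' ≤ r) : DecreasesNear W x v r' q :=
  hW.imp fun _ h => ⟨h.1, fun y hy => h.2 y (Metric.closedBall_subset_closedBall hr hy)⟩

lemma fderiv_apply_le_of_forall_le {U : E → ℝ} {x v : E} {q τ₀ : ℝ} (hU : DifferentiableAt ℝ U x)
    (hτ₀ : 0 < τ₀) (h : ∀ τ ∈ Ioo 0 τ₀, U (x + τ • v) ≤ U x - τ * q) :
    fderiv ℝ U x v ≤ -q := by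
  have h1 : HasDerivAt (fun τ : ℝ => x + τ • v) v 0 := by
    simpa using ((hasDerivAt_id (0:ℝ)).smul_const v).const_add x
  have hU' : HasFDerivAt U (fderiv ℝ U x) (x + (0:ℝ) • v) := by simpa using hU.hasFDerivAt
  have h2 := hU'.comp_hasDerivAt (0:ℝ) h1
  have h3 := h2.tendsto_slope_zero_right
  refine le_of_tendsto h3 ?_
  filter_upwards [Ioo_mem_nhdsGT hτ₀] with τ hτ
  have := h τ hτ
  simp only [Function.comp_apply, zero_add, zero_smul, add_zero, smul_eq_mul]
  rw [inv_mul_le_iff₀ hτ.1]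
  linarith

variable [FiniteDimensional ℝ E] [MeasurableSpace E] [BorelSpace E]

/-- Mollification preserves directional decrease. -/
lemma exists_contDiff_approx {W : E → ℝ} (hW : Continuous W) (R : ℝ) {e r : ℝ} (he : 0 < e)
    (hr : 0 < r) :
    ∃ U : E → ℝ, ContDiff ℝ ∞ U ∧ (∀ x, ‖x‖ ≤ R → |U x - W x| ≤ e) ∧
      ∀ x v q, DecreasesNear W x v r q → fderiv ℝ U x v ≤ -q := by
  have hUC := (isCompact_closedBall (0:E) (R + 1)).uniformContinuousOn_of_continuous
    hW.continuousOn
  obtain ⟨d, hd, hdW⟩ := Metric.uniformContinuousOn_iff.1 hUC e he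
  set ϱ := min 1 (min d r) with hϱ
  have hϱ0 : 0 < ϱ := by positivity
  let φ : ContDiffBump (0:E) := ⟨ϱ / 2, ϱ, by positivity, by linarith⟩
  set U : E → ℝ := convolution (φ.normed volume) W (ContinuousLinearMap.lsmul ℝ ℝ) volume with hU
  have hint : ∀ x, Integrable (fun t => φ.normed volume t * W (x - t)) := fun x =>
    (φ.continuous_normed.mul (hW.comp (by fun_prop))).integrable_of_hasCompactSupport
      φ.hasCompactSupport_normed.mul_right
  have hUe : ∀ x, U x = ∫ t, φ.normed volume t * W (x - t) := fun x => by
    simp [hU, convolution_def]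
  have hUs : ContDiff ℝ ∞ U :=
    φ.hasCompactSupport_normed.contDiff_convolution_left _ φ.contDiff_normed hW.locallyIntegrable
  refine ⟨U, hUs, fun x hx => ?_, fun x v q hdec => ?_⟩
  · rw [← Real.dist_eq]
    refine φ.dist_normed_convolution_le hW.aestronglyMeasurable fun y hy => ?_
    have hy' : dist y x < ϱ := hy
    refine (hdW y ?_ x ?_ (hy'.trans_le ((min_le_right _ _).trans (min_le_left _ _)))).le
    · have h1 : ϱ ≤ 1 := min_le_left _ _
      have h2 := norm_le_norm_add_norm_sub' y x
      rw [dist_eq_norm] at hy'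
      rw [mem_closedBall_zero_iff]; linarith
    · rw [mem_closedBall_zero_iff]; linarith
  · obtain ⟨τ₀, hτ₀, hdec⟩ := hdec
    refine fderiv_apply_le_of_forall_le (hUs.differentiable (by simp) x) hτ₀ fun τ hτ => ?_
    have hq : ∫ t, φ.normed volume t * (τ * q) = τ * q := by
      rw [integral_mul_const, φ.integral_normed, one_mul]
    rw [hUe, hUe, ← hq, ← integral_sub (hint x) (φ.integrable_normed.mul_const _)]
    refine integral_mono (hint _) ((hint x).sub (φ.integrable_normed.mul_const _)) fun t => ?_
    simp only [← mul_sub]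
    by_cases ht : t ∈ Function.support (φ.normed volume)
    · refine mul_le_mul_of_nonneg_left ?_ (φ.nonneg_normed t)
      rw [φ.support_normed_eq] at ht
      have ht' : ‖t‖ < ϱ := by simpa using ht
      have := hdec (x - t) (by
        rw [Metric.mem_closedBall, dist_eq_norm]
        simpa using (ht'.le.trans ((min_le_right _ _).trans (min_le_right _ _)))) τ hτ
      rwa [show x + τ • v - t = x - t + τ • v by abel]
    · rw [Function.notMem_support.1 ht, zero_mul, zero_mul]

/-- A smooth approximation whose accuracy varies with the norm and which keeps directional
decrease. -/
lemma exists_contDiff_approx_shells {W : E → ℝ} (hW : Continuous W) {r δ : ℕ → ℝ}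
    (hr : ∀ j, 0 < r j) (hδ : ∀ j, 0 < δ j) :
    ∃ U : E → ℝ, ContDiff ℝ ∞ U ∧ (∀ x, |U x - W x| ≤ δ ⌊‖x‖ ^ 2⌋₊) ∧
      ∀ x v q, DecreasesNear W x v (r ⌊‖x‖ ^ 2⌋₊) q →
        fderiv ℝ U x v ≤ -q + δ ⌊‖x‖ ^ 2⌋₊ * ‖v‖ := by
  set η : ℕ → E → ℝ := fun j x => Real.smoothTransition (3 * (‖x‖ ^ 2 - j) - 1) with hη
  have hηs : ∀ j, ContDiff ℝ ∞ (η j) := fun j =>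
    Real.smoothTransition.contDiff.comp
      ((contDiff_const.mul ((contDiff_norm_sq ℝ).sub contDiff_const)).sub contDiff_const)
  have hD : ∀ j : ℕ, ∃ D, 0 ≤ D ∧ ∀ x, ‖x‖ ≤ j + 1 → ‖fderiv ℝ (η j) x‖ ≤ D := fun j =>
    ((hηs j).continuous_fderiv (by simp)).exists_norm_le_of_norm_le _
  choose D hD0 hD using hD
  set c : ℕ → ℝ := fun j => δ j / (1 + D j) with hc
  have hc0 : ∀ j, 0 < c j := fun j => div_pos (hδ j) (by linarith [hD0 j])
  have hcδ : ∀ j, c j + D j * c j = δ j := fun j => by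
    have : 1 + D j ≠ 0 := by linarith [hD0 j]
    simp only [hc]; field_simp
  choose U hUs hUa hUd using fun j : ℕ => exists_contDiff_approx hW (R := j + 1)
    (e := min (c j) (c (j - 1)) / 2) (r := min (r j) (r (j - 1)))
    (half_pos (lt_min (hc0 _) (hc0 _))) (lt_min (hr _) (hr _))
  set G : ℕ → E → ℝ := fun j x => U j x + η j x * (U (j + 1) x - U j x) with hG
  have hGs : ∀ j, ContDiff ℝ ∞ (G j) := fun j =>
    (hUs j).add ((hηs j).mul ((hUs (j + 1)).sub (hUs j)))
  have hη0 : ∀ (j : ℕ) (x : E), ‖x‖ ^ 2 - j ≤ 1 / 3 → η j x = 0 := fun j x hx =>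
    Real.smoothTransition.zero_of_nonpos (by linarith)
  have hη1 : ∀ (j : ℕ) (x : E), 2 / 3 ≤ ‖x‖ ^ 2 - j → η j x = 1 := fun j x hx =>
    Real.smoothTransition.one_of_one_le (by linarith)
  have hloc : ∀ x, (fun y => G ⌊‖y‖ ^ 2⌋₊ y) =ᶠ[𝓝 x] G ⌊‖x‖ ^ 2⌋₊ := by
    intro x
    set j := ⌊‖x‖ ^ 2⌋₊ with hj
    have h1 : (j : ℝ) ≤ ‖x‖ ^ 2 := Nat.floor_le (by positivity)
    have h2 : ‖x‖ ^ 2 < j + 1 := Nat.lt_floor_add_one _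
    have hcont : ContinuousAt (fun y : E => ‖y‖ ^ 2) x := by fun_prop
    filter_upwards [hcont.eventually (lt_mem_nhds (show (j:ℝ) - 1 / 3 < ‖x‖ ^ 2 by linarith)),
      hcont.eventually (gt_mem_nhds h2)] with y hy1 hy2
    rcases le_or_gt (j : ℝ) (‖y‖ ^ 2) with hle | hlt
    · rw [(Nat.floor_eq_iff (by positivity)).2 ⟨hle, hy2⟩]
    · obtain ⟨i, hi⟩ : ∃ i, j = i + 1 := Nat.exists_eq_succ_of_ne_zero fun h0 => by
        rw [h0, Nat.cast_zero] at hlt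
        exact absurd hlt (not_lt.2 (by positivity))
      rw [hi] at hy1 hlt ⊢
      push_cast at hy1 hlt
      rw [(Nat.floor_eq_iff (by positivity)).2 ⟨by linarith, hlt⟩]
      simp only [hG]
      rw [hη1 i y (by linarith), hη0 (i + 1) y (by push_cast; linarith)]
      ring
  have hnorm : ∀ x : E, ‖x‖ ≤ ⌊‖x‖ ^ 2⌋₊ + 1 := fun x => by
    have := Nat.lt_floor_add_one (‖x‖ ^ 2)
    nlinarith [norm_nonneg x]
  have happ : ∀ x, |U ⌊‖x‖ ^ 2⌋₊ x - W x| ≤ c ⌊‖x‖ ^ 2⌋₊ / 2 ∧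
      |U (⌊‖x‖ ^ 2⌋₊ + 1) x - W x| ≤ c ⌊‖x‖ ^ 2⌋₊ / 2 := fun x => by
    set j := ⌊‖x‖ ^ 2⌋₊ with hj
    constructor
    · exact (hUa j x (hnorm x)).trans (by linarith [min_le_left (c j) (c (j - 1))])
    · refine (hUa (j + 1) x (by push_cast; linarith [hnorm x])).trans ?_
      have := min_le_right (c (j + 1)) (c (j + 1 - 1))
      rw [Nat.add_sub_cancel] at this ⊢
      linarith
  have hηI : ∀ j x, 0 ≤ η j x ∧ η j x ≤ 1 := fun j x =>
    ⟨Real.smoothTransition.nonneg _, Real.smoothTransition.le_one _⟩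
  refine ⟨fun x => G ⌊‖x‖ ^ 2⌋₊ x, ?_, fun x => ?_, fun x v q hdec => ?_⟩
  · rw [contDiff_iff_contDiffAt]
    exact fun x => (hGs _).contDiffAt.congr_of_eventuallyEq (hloc x)
  · obtain ⟨h1, h2⟩ := happ x
    obtain ⟨h3, h4⟩ := hηI ⌊‖x‖ ^ 2⌋₊ x
    have h5 := hcδ ⌊‖x‖ ^ 2⌋₊
    have h6 : 0 ≤ D ⌊‖x‖ ^ 2⌋₊ * c ⌊‖x‖ ^ 2⌋₊ := mul_nonneg (hD0 _) (hc0 _).le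
    have h7 := hc0 ⌊‖x‖ ^ 2⌋₊
    simp only [hG]
    rw [abs_le] at h1 h2 ⊢
    constructor <;> nlinarith
  · rw [(hloc x).fderiv_eq]
    obtain ⟨h1, h2⟩ := happ x
    set j := ⌊‖x‖ ^ 2⌋₊ with hj
    obtain ⟨h3, h4⟩ := hηI j x
    have d1 := ((hUs j).differentiable (by simp) x).hasFDerivAt
    have d2 := ((hUs (j + 1)).differentiable (by simp) x).hasFDerivAt
    have d3 := ((hηs j).differentiable (by simp) x).hasFDerivAt
    have d4 := d1.add (d3.mul (d2.sub d1))
    have e4 : fderiv ℝ (G j) x = _ := d4.fderiv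
    rw [e4]
    simp only [add_apply, sub_apply, smul_eq_mul,
      smul_apply]
    have h5 := hUd j x v q (hdec.mono (min_le_left _ _))
    have h6 := hUd (j + 1) x v q (hdec.mono (min_le_right _ _))
    have h7 : |fderiv ℝ (η j) x v| ≤ D j * ‖v‖ :=
      ((fderiv ℝ (η j) x).le_opNorm v).trans
        (mul_le_mul_of_nonneg_right (hD j x (hnorm x)) (norm_nonneg v))
    have h8 : |U (j + 1) x - U j x| ≤ c j := by
      rw [abs_le] at h1 h2 ⊢
      constructor <;> linarith
    have h9 : (U (j + 1) x - U j x) * fderiv ℝ (η j) x v ≤ c j * (D j * ‖v‖) := by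
      refine (le_abs_self _).trans ?_
      rw [abs_mul]
      exact mul_le_mul h8 h7 (abs_nonneg _) (hc0 j).le
    have h10 : c j * (D j * ‖v‖) ≤ δ j * ‖v‖ := by
      rw [← mul_assoc]
      exact mul_le_mul_of_nonneg_right (by linarith [hcδ j, hc0 j, mul_comm (D j) (c j)])
        (norm_nonneg v)
    simp only [Pi.sub_apply]
    nlinarith

end Smoothing

/-! ### Smooth series -/

section SmoothSeries

variable {E : Type*} [NormedAddCommGroup E] [InnerProductSpace ℝ E] [FiniteDimensional ℝ E]

/-- Any sequence of smooth functions has a smooth positive combination, which can be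
differentiated termwise. -/
lemma exists_contDiff_tsum {ψ : ℕ → E → ℝ} (hψ : ∀ k, ContDiff ℝ ∞ (ψ k)) :
    ∃ a : ℕ → ℝ, (∀ k, 0 < a k) ∧ (∀ k, a k ≤ 1 / 2 / 2 ^ k) ∧
      ContDiff ℝ ∞ (fun x => ∑' k, a k * ψ k x) ∧ (∀ x, Summable fun k => a k * ψ k x) ∧
      ∀ x v, HasSum (fun k => a k * fderiv ℝ (ψ k) x v)
        (fderiv ℝ (fun x => ∑' k, a k * ψ k x) x v) := by
  set η : ℕ → E → ℝ := fun j x => Real.smoothTransition (j + 2 - ‖x‖ ^ 2) with hη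
  have hηs : ∀ j, ContDiff ℝ ∞ (η j) := fun j =>
    Real.smoothTransition.contDiff.comp (contDiff_const.sub (contDiff_norm_sq ℝ))
  have hηc : ∀ j, HasCompactSupport (η j) := fun j => by
    refine HasCompactSupport.of_support_subset_isCompact (isCompact_closedBall 0 (j + 2)) ?_
    refine fun x hx => ?_
    rw [mem_closedBall_zero_iff]
    by_contra! hlt
    refine hx (Real.smoothTransition.zero_of_nonpos ?_)
    have : (0:ℝ) ≤ j := j.cast_nonneg
    nlinarith
  have hs : ∀ j k, ContDiff ℝ ∞ (fun x => η j x * ψ k x) := fun j k => (hηs j).mul (hψ k)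
  have hB : ∀ i j k, ∃ B, 0 ≤ B ∧ ∀ x, ‖iteratedFDeriv ℝ i (fun x => η j x * ψ k x) x‖ ≤ B := by
    intro i j k
    obtain ⟨B, hB⟩ := (((hηc j).mul_right (f' := ψ k)).iteratedFDeriv (𝕜 := ℝ) i
      ).exists_bound_of_continuous ((hs j k).continuous_iteratedFDeriv (by exact_mod_cast le_top))
    exact ⟨B, (norm_nonneg _).trans (hB 0), hB⟩
  choose B hB0 hB using hB
  set S : ℕ → ℝ := fun k => ∑ i ∈ Finset.range (k + 1), ∑ j ∈ Finset.range (k + 1), B i j k with hS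
  have hS0 : ∀ k, 0 ≤ S k := fun k =>
    Finset.sum_nonneg fun i _ => Finset.sum_nonneg fun j _ => hB0 i j k
  set a : ℕ → ℝ := fun k => 1 / 2 / 2 ^ k / (1 + S k) with ha
  have ha0 : ∀ k, 0 < a k := fun k => div_pos (by positivity) (by linarith [hS0 k])
  have haS : ∀ k, a k * (1 + S k) = 1 / 2 / 2 ^ k := fun k =>
    div_mul_cancel₀ _ (by linarith [hS0 k])
  have hsum : ∀ i j, Summable fun k => a k * B i j k := fun i j => by
    refine Summable.of_norm_bounded_eventually_nat (g := fun k => 1 / 2 / 2 ^ k)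
      (summable_geometric_two' 1) ?_
    filter_upwards [eventually_ge_atTop (max i j)] with k hk
    rw [Real.norm_of_nonneg (mul_nonneg (ha0 k).le (hB0 i j k)), ← haS k]
    refine mul_le_mul_of_nonneg_left ?_ (ha0 k).le
    have h1 : B i j k ≤ ∑ j ∈ Finset.range (k + 1), B i j k :=
      Finset.single_le_sum (f := fun j => B i j k) (fun j _ => hB0 i j k)
        (Finset.mem_range.2 (Nat.lt_succ_of_le ((le_max_right i j).trans hk)))
    have h2 : ∑ j ∈ Finset.range (k + 1), B i j k ≤ S k :=
      Finset.single_le_sum (f := fun i => ∑ j ∈ Finset.range (k + 1), B i j k)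
        (fun i _ => Finset.sum_nonneg fun j _ => hB0 i j k)
        (Finset.mem_range.2 (Nat.lt_succ_of_le ((le_max_left i j).trans hk)))
    linarith
  have hbd : ∀ i j k x, ‖iteratedFDeriv ℝ i (fun x => a k * (η j x * ψ k x)) x‖
      ≤ a k * B i j k := fun i j k x => by
    have : (fun x => a k * (η j x * ψ k x)) = a k • fun x => η j x * ψ k x := rfl
    rw [this, iteratedFDeriv_const_smul_apply
      ((hs j k).contDiffAt.of_le (by exact_mod_cast le_top)), norm_smul,
      Real.norm_of_nonneg (ha0 k).le]
    exact mul_le_mul_of_nonneg_left (hB i j k x) (ha0 k).le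
  have hloc : ∀ x : E, ∀ᶠ y in 𝓝 x, η ⌊‖x‖ ^ 2⌋₊ y = 1 := fun x => by
    have hcont : ContinuousAt (fun y : E => ‖y‖ ^ 2) x := by fun_prop
    filter_upwards [hcont.eventually (gt_mem_nhds (Nat.lt_floor_add_one (‖x‖ ^ 2)))] with y hy
    exact Real.smoothTransition.one_of_one_le (by linarith)
  have hlocV : ∀ x : E, (fun y => ∑' k, a k * ψ k y) =ᶠ[𝓝 x]
      fun y => ∑' k, a k * (η ⌊‖x‖ ^ 2⌋₊ y * ψ k y) := fun x => by
    filter_upwards [hloc x] with y hy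
    simp only [hy, one_mul]
  have hs' : ∀ j k, ContDiff ℝ ∞ (fun x => a k * (η j x * ψ k x)) := fun j k =>
    contDiff_const.mul (hs j k)
  have hsummable : ∀ j (x : E), Summable fun k => a k * (η j x * ψ k x) := fun j x =>
    Summable.of_norm_bounded (hsum 0 j) fun k => by
      simpa only [norm_iteratedFDeriv_zero] using hbd 0 j k x
  have hbd1 : ∀ j k x, ‖fderiv ℝ (fun x => a k * (η j x * ψ k x)) x‖ ≤ a k * B 1 j k :=
    fun j k x => by simpa only [norm_iteratedFDeriv_one] using hbd 1 j k x
  refine ⟨a, ha0, fun k => ?_, ?_, fun x => ?_, fun x v => ?_⟩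
  · rw [← haS k]
    nlinarith [mul_nonneg (ha0 k).le (hS0 k)]
  · rw [contDiff_iff_contDiffAt]
    intro x
    refine ContDiffAt.congr_of_eventuallyEq ?_ (hlocV x)
    exact (contDiff_tsum (fun k => hs' _ k) (fun i _ => hsum i _)
      fun i k x _ => hbd i _ k x).contDiffAt
  · have h1 : η ⌊‖x‖ ^ 2⌋₊ x = 1 := (hloc x).self_of_nhds
    exact (hsummable ⌊‖x‖ ^ 2⌋₊ x).congr fun k => by rw [h1, one_mul]
  · have h1 : ∀ k, fderiv ℝ (fun y => a k * (η ⌊‖x‖ ^ 2⌋₊ y * ψ k y)) x = a k • fderiv ℝ (ψ k) x :=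
      fun k => by
        have : (fun y => a k * (η ⌊‖x‖ ^ 2⌋₊ y * ψ k y)) =ᶠ[𝓝 x] fun y => a k * ψ k y := by
          filter_upwards [hloc x] with y hy
          rw [hy, one_mul]
        rw [this.fderiv_eq]
        exact fderiv_const_mul ((hψ k).differentiable (by simp) x) _
    have h2 : Summable fun k => fderiv ℝ (fun y => a k * (η ⌊‖x‖ ^ 2⌋₊ y * ψ k y)) x :=
      Summable.of_norm_bounded (hsum 1 _) fun k => hbd1 _ k x
    have h3 := hasFDerivAt_tsum (hsum 1 ⌊‖x‖ ^ 2⌋₊)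
      (fun k y => ((hs' ⌊‖x‖ ^ 2⌋₊ k).differentiable (by simp) y).hasFDerivAt)
      (fun k y => hbd1 _ k y) (hsummable _ x) x
    rw [(hlocV x).fderiv_eq, h3.fderiv]
    have h4 := (ContinuousLinearMap.apply ℝ ℝ v).hasSum h2.hasSum
    simpa only [h1, ContinuousLinearMap.apply_apply, smul_apply, smul_eq_mul] using h4

end SmoothSeries

/-! ### A smooth Lyapunov function for an SIIOS system -/

section SmoothLyapunov

variable {n m p : ℕ}
  {f : EuclideanSpace ℝ (Fin n) → EuclideanSpace ℝ (Fin m) → EuclideanSpace ℝ (Fin n)}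
  {h : EuclideanSpace ℝ (Fin n) → EuclideanSpace ℝ (Fin p)}
  {x : ℝ → EuclideanSpace ℝ (Fin n) → (ℝ → EuclideanSpace ℝ (Fin m)) → EuclideanSpace ℝ (Fin n)}
  {β : ℝ → ℝ → ℝ} {g : ℝ ≃o ℝ}

lemma exists_pos_forall_le_of_pos {Q : ℕ → ℝ} (hQ : ∀ k, 0 < Q k) (K : ℕ) :
    ∃ q, 0 < q ∧ ∀ k ≤ K, q ≤ Q k := by
  obtain ⟨j, -, hj⟩ := Finset.exists_min_image (Finset.range (K + 1)) Q ⟨0, by simp⟩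
  exact ⟨Q j, hQ j, fun k hk => hj k (Finset.mem_range.2 (Nat.lt_succ_of_le hk))⟩

/-- A smooth approximation of the open-loop value above the level `3 * ε`. -/
lemma SIIOSEstimate.exists_contDiff_approx_value (H : SIIOSEstimate f h x β g) {ε : ℝ}
    (hε : 0 < ε) :
    ∃ U : EuclideanSpace ℝ (Fin n) → ℝ, ContDiff ℝ ∞ U ∧
      (∀ ξ, |U ξ - max (openLoopValue h x g ξ) ε| ≤ ε) ∧
      ∃ Q : ℕ → ℝ, (∀ k, 0 < Q k) ∧ ∀ ξ μ, 3 * ε ≤ openLoopValue h x g ξ →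
        ‖μ‖ ≤ g (openLoopValue h x g ξ / 4) →
        fderiv ℝ U ξ (f ξ μ) ≤ -Q ⌈openLoopValue h x g ξ⌉₊ := by
  obtain ⟨Q, hQ, hdec⟩ := H.frozen_decrease hε
  choose r hr hdec using hdec
  choose A hA0 hA using fun j : ℕ => H.exists_value_le (j + 1)
  choose B hB0 hB using fun j : ℕ => exists_norm_bound H.lipschitz_f (j + 1) (g (A j / 4))
  choose q hq0 hq using fun j : ℕ => exists_pos_forall_le_of_pos hQ ⌈A j⌉₊
  have hδ : ∀ j, 0 < min ε (q j / (2 * (B j + 1))) := fun j =>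
    lt_min hε (div_pos (hq0 j) (by linarith [hB0 j]))
  obtain ⟨U, hU, hUW, hUd⟩ := exists_contDiff_approx_shells (H.continuous_max_value hε)
    (r := fun j => r (j + 1)) (fun j => hr (j + 1)) hδ
  refine ⟨U, hU, fun ξ => (hUW ξ).trans (min_le_left _ _), fun k => Q k / 2,
    fun k => half_pos (hQ k), fun ξ μ hξ hμ => ?_⟩
  set j := ⌊‖ξ‖ ^ 2⌋₊ with hj
  have hnorm : ‖ξ‖ ≤ j + 1 := by
    have := Nat.lt_floor_add_one (‖ξ‖ ^ 2)
    nlinarith [norm_nonneg ξ]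
  have h1 := hUd ξ (f ξ μ) _ (hdec (j + 1) ξ μ (by exact_mod_cast hnorm) hξ hμ)
  have h2 : ‖f ξ μ‖ ≤ B j :=
    hB j ξ μ hnorm (hμ.trans (g.monotone (by linarith [hA j ξ hnorm])))
  have h3 : q j ≤ Q ⌈openLoopValue h x g ξ⌉₊ := hq j _ (Nat.ceil_mono (hA j ξ hnorm))
  have h4 : min ε (q j / (2 * (B j + 1))) * ‖f ξ μ‖ ≤ q j / 2 := by
    have hB1 : 0 < B j + 1 := by linarith [hB0 j]
    calc min ε (q j / (2 * (B j + 1))) * ‖f ξ μ‖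
        ≤ q j / (2 * (B j + 1)) * (B j + 1) :=
          mul_le_mul (min_le_right _ _) (by linarith) (norm_nonneg _)
            (div_nonneg (hq0 j).le (by linarith))
      _ = q j / 2 := by field_simp
  linarith

/-- A smooth function vanishing below a level of the open-loop value and strictly decreasing
along trajectories above it. -/
lemma SIIOSEstimate.exists_contDiff_level (H : SIIOSEstimate f h x β g) {ε : ℝ} (hε : 0 < ε) :
    ∃ ψ : EuclideanSpace ℝ (Fin n) → ℝ, ContDiff ℝ ∞ ψ ∧ (∀ ξ, 0 ≤ ψ ξ) ∧
      (∀ ξ, ψ ξ ≤ 2 * openLoopValue h x g ξ) ∧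
      (∃ b, 0 < b ∧ ∀ ξ, 6 * ε ≤ openLoopValue h x g ξ → b * openLoopValue h x g ξ ≤ ψ ξ) ∧
      (∀ ξ μ, ‖μ‖ ≤ g (openLoopValue h x g ξ / 4) → fderiv ℝ ψ ξ (f ξ μ) ≤ 0) ∧
      ∀ C, ∃ q, 0 < q ∧ ∀ ξ μ, 6 * ε ≤ openLoopValue h x g ξ → openLoopValue h x g ξ ≤ C →
        ‖μ‖ ≤ g (openLoopValue h x g ξ / 4) → fderiv ℝ ψ ξ (f ξ μ) ≤ -q := by
  obtain ⟨U, hU, hUW, Q, hQ, hUd⟩ := H.exists_contDiff_approx_value hε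
  set E := expNegInvGlue with hE
  have hEs : ContDiff ℝ ∞ E := expNegInvGlue.contDiff
  have hEd : Differentiable ℝ E := hEs.differentiable (by simp)
  have hE1 : ∀ s, E s ≤ 1 := fun s => by
    rw [hE, expNegInvGlue]
    split_ifs with hs
    · exact zero_le_one
    · exact Real.exp_le_one_iff.2 (neg_nonpos.2 (inv_nonneg.2 (not_le.1 hs).le))
  have hEd0 : ∀ s, 0 ≤ deriv E s := fun s => expNegInvGlue.monotone.deriv_nonneg
  have hEz : ∀ s, s ≤ 0 → deriv E s = 0 := fun s hs => by
    have h1 : HasDerivWithinAt E (deriv E s) (Iic s) s := (hEd s).hasDerivAt.hasDerivWithinAt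
    have h2 : HasDerivWithinAt E 0 (Iic s) s :=
      (hasDerivWithinAt_const s (Iic s) (0:ℝ)).congr
        (fun y hy => expNegInvGlue.zero_of_nonpos (le_trans hy hs))
        (expNegInvGlue.zero_of_nonpos hs)
    exact (uniqueDiffWithinAt_Iic s).eq_deriv _ h1 h2
  set V := openLoopValue h x g with hV
  have hhigh : ∀ ξ, 4 * ε < U ξ → 3 * ε ≤ V ξ ∧ U ξ ≤ V ξ + ε := fun ξ hξ => by
    have h1 := (abs_le.1 (hUW ξ)).2
    rcases le_total (V ξ) ε with h2 | h2
    · rw [max_eq_right h2] at h1; linarith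
    · rw [max_eq_left h2] at h1; constructor <;> linarith
  have hlow : ∀ ξ, V ξ - ε ≤ U ξ := fun ξ => by
    have h1 := (abs_le.1 (hUW ξ)).1
    linarith [le_max_left (V ξ) ε]
  have hU0 : ∀ ξ, 0 ≤ U ξ := fun ξ => by
    have h1 := (abs_le.1 (hUW ξ)).1
    linarith [le_max_right (V ξ) ε]
  have hψd : ∀ ξ v, fderiv ℝ (fun ξ => U ξ * E (U ξ - 4 * ε)) ξ v =
      (E (U ξ - 4 * ε) + U ξ * deriv E (U ξ - 4 * ε)) * fderiv ℝ U ξ v := fun ξ v => by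
    have d1 := (hU.differentiable (by simp) ξ).hasFDerivAt
    have d2 := (hEd (U ξ - 4 * ε)).hasDerivAt.comp_hasFDerivAt ξ (d1.sub_const (4 * ε))
    have d3 := (d1.mul d2).fderiv
    have e3 : fderiv ℝ (fun ξ => U ξ * E (U ξ - 4 * ε)) ξ = _ := d3
    rw [e3]
    simp only [add_apply, smul_apply, smul_eq_mul, Function.comp_apply]
    ring
  have hdec : ∀ ξ μ, 4 * ε < U ξ → ‖μ‖ ≤ g (V ξ / 4) →
      fderiv ℝ (fun ξ => U ξ * E (U ξ - 4 * ε)) ξ (f ξ μ) ≤ -(E (U ξ - 4 * ε) * Q ⌈V ξ⌉₊) := by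
    intro ξ μ hξ hμ
    rw [hψd]
    have h1 := hUd ξ μ (hhigh ξ hξ).1 hμ
    have h2 : 0 ≤ E (U ξ - 4 * ε) := expNegInvGlue.nonneg _
    have h3 := mul_nonneg (hU0 ξ) (hEd0 (U ξ - 4 * ε))
    nlinarith [hQ ⌈V ξ⌉₊]
  have hEε : 0 < E ε := expNegInvGlue.pos_of_pos hε
  refine ⟨fun ξ => U ξ * E (U ξ - 4 * ε), hU.mul (hEs.comp (hU.sub contDiff_const)),
    fun ξ => mul_nonneg (hU0 ξ) (expNegInvGlue.nonneg _), fun ξ => ?_, ⟨E ε / 2, half_pos hEε,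
    fun ξ hξ => ?_⟩, fun ξ μ hμ => ?_, fun C => ?_⟩
  · rcases le_or_gt (U ξ) (4 * ε) with h1 | h1
    · have h2 : E (U ξ - 4 * ε) = 0 := expNegInvGlue.zero_of_nonpos (by linarith)
      simp only [h2, mul_zero]
      linarith [H.value_nonneg ξ]
    · have h2 := hhigh ξ h1
      have h3 := mul_le_mul_of_nonneg_left (hE1 (U ξ - 4 * ε)) (hU0 ξ)
      linarith
  · have h1 := hlow ξ
    have h2 : E ε ≤ E (U ξ - 4 * ε) := expNegInvGlue.monotone (by linarith)
    calc E ε / 2 * V ξ = V ξ / 2 * E ε := by ring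
      _ ≤ U ξ * E (U ξ - 4 * ε) := mul_le_mul (by linarith) h2 hEε.le (hU0 ξ)
  · rcases le_or_gt (U ξ) (4 * ε) with h1 | h1
    · rw [hψd, hEz _ (by linarith)]
      have h2 : E (U ξ - 4 * ε) = 0 := expNegInvGlue.zero_of_nonpos (by linarith)
      simp [h2]
    · refine (hdec ξ μ h1 hμ).trans (neg_nonpos.2 (mul_nonneg (expNegInvGlue.nonneg _) (hQ _).le))
  · obtain ⟨q, hq0, hq⟩ := exists_pos_forall_le_of_pos hQ ⌈C⌉₊
    refine ⟨E ε * q, mul_pos hEε hq0, fun ξ μ hξ hC hμ => ?_⟩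
    have h1 := hlow ξ
    refine (hdec ξ μ (by linarith) hμ).trans (neg_le_neg ?_)
    exact mul_le_mul (expNegInvGlue.monotone (by linarith)) (hq _ (Nat.ceil_mono hC)) hq0.le
      (expNegInvGlue.nonneg _)

/-- A smooth function which is comparable with the open-loop value and decreases along
trajectories, locally uniformly in the value. -/
lemma SIIOSEstimate.exists_contDiff_value (H : SIIOSEstimate f h x β g) :
    ∃ V : EuclideanSpace ℝ (Fin n) → ℝ, ContDiff ℝ ∞ V ∧ (∀ ξ, 0 ≤ V ξ) ∧
      (∀ ξ, V ξ ≤ 2 * openLoopValue h x g ξ) ∧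
      (∀ c, 0 < c → ∃ b, 0 < b ∧
        ∀ ξ, c ≤ openLoopValue h x g ξ → b * openLoopValue h x g ξ ≤ V ξ) ∧
      (∀ ξ μ, ‖μ‖ ≤ g (openLoopValue h x g ξ / 4) → fderiv ℝ V ξ (f ξ μ) ≤ 0) ∧
      ∀ c C, 0 < c → ∃ q, 0 < q ∧ ∀ ξ μ, c ≤ openLoopValue h x g ξ → openLoopValue h x g ξ ≤ C →
        ‖μ‖ ≤ g (openLoopValue h x g ξ / 4) → fderiv ℝ V ξ (f ξ μ) ≤ -q := by
  choose ψ hψ hψ0 hψle hψb hψn hψq using fun k : ℕ =>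
    H.exists_contDiff_level (ε := (1 / 2) ^ k) (by positivity)
  choose b hb0 hb using hψb
  obtain ⟨a, ha0, ha, hV, hsum, hd⟩ := exists_contDiff_tsum hψ
  have hterm0 : ∀ ξ k, 0 ≤ a k * ψ k ξ := fun ξ k => mul_nonneg (ha0 k).le (hψ0 k ξ)
  have hk : ∀ c : ℝ, 0 < c → ∃ k : ℕ, 6 * (1 / 2 : ℝ) ^ k ≤ c := fun c hc => by
    obtain ⟨k, hk⟩ := exists_pow_lt_of_lt_one (div_pos hc (by norm_num : (0:ℝ) < 6))
      (by norm_num : (1 / 2 : ℝ) < 1)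
    exact ⟨k, by linarith⟩
  refine ⟨fun ξ => ∑' k, a k * ψ k ξ, hV, fun ξ => tsum_nonneg (hterm0 ξ), fun ξ => ?_,
    fun c hc => ?_, fun ξ μ hμ => ?_, fun c C hc => ?_⟩
  · have h1 := (hasSum_geometric_two' 1).mul_right (2 * openLoopValue h x g ξ)
    rw [one_mul] at h1
    refine hasSum_le (fun k => ?_) (hsum ξ).hasSum h1
    exact mul_le_mul (ha k) (hψle k ξ) (hψ0 k ξ) (by positivity)
  · obtain ⟨k, hk⟩ := hk c hc
    refine ⟨a k * b k, mul_pos (ha0 k) (hb0 k), fun ξ hξ => ?_⟩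
    refine le_trans ?_ ((hsum ξ).le_tsum k fun j _ => hterm0 ξ j)
    rw [mul_assoc]
    exact mul_le_mul_of_nonneg_left (hb k ξ (hk.trans hξ)) (ha0 k).le
  · exact hasSum_le (fun k => mul_nonpos_of_nonneg_of_nonpos (ha0 k).le (hψn k ξ μ hμ))
      (hd ξ (f ξ μ)) hasSum_zero
  · obtain ⟨k, hk⟩ := hk c hc
    obtain ⟨q, hq0, hq⟩ := hψq k C
    refine ⟨a k * q, mul_pos (ha0 k) hq0, fun ξ μ hξ hC hμ => ?_⟩
    have h1 := le_hasSum (hd ξ (f ξ μ)).neg k fun j _ =>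
      neg_nonneg.2 (mul_nonpos_of_nonneg_of_nonpos (ha0 j).le (hψn j ξ μ hμ))
    have h2 := mul_le_mul_of_nonneg_left (hq ξ μ (hk.trans hξ) hC hμ) (ha0 k).le
    linarith

end SmoothLyapunov

section Rescaling

open scoped Manifold

lemma IsClassK.one_add_mul {κ : ℝ → ℝ} (hκ : IsClassK κ) :
    IsClassKInfty fun s => (1 + s) * κ s := by
  refine ⟨⟨(continuousOn_const.add continuousOn_id).mul hκ.1, fun s hs t ht hst => ?_,
    by simp [hκ.2.2]⟩, ?_⟩
  · have hs' : (0:ℝ) ≤ s := hs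
    exact mul_lt_mul'' (by linarith) (hκ.2.1 hs ht hst) (by linarith) (hκ.nonneg hs)
  · refine tendsto_atTop_mono' _ ?_ (tendsto_id.atTop_mul_const (hκ.pos one_pos))
    filter_upwards [eventually_ge_atTop 1] with s hs
    exact mul_le_mul (by simp) (hκ.mono zero_le_one hs) (hκ.pos one_pos).le (by linarith)

/-- There are smooth class `K∞` functions whose derivative has prescribed locally bounded lower
bounds. -/
lemma exists_contDiff_classKInfty {t : ℝ → Set ℝ} (hup : ∀ s, IsUpperSet (t s))
    (hloc : ∀ s, ∃ c, ∀ᶠ y in 𝓝 s, c ∈ t y) :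
    ∃ Θ : ℝ → ℝ, ContDiff ℝ ∞ Θ ∧ IsClassKInfty Θ ∧ ∀ s, 1 ≤ deriv Θ s ∧ deriv Θ s ∈ t s := by
  obtain ⟨θ, hθ⟩ := exists_contMDiffMap_forall_mem_convex_of_local_const (n := (⊤ : ℕ∞)) 𝓘(ℝ, ℝ)
    (t := fun s => t s ∩ Ici 1)
    (fun s => (hup s).ordConnected.convex.inter (convex_Ici 1)) (fun s => by
      obtain ⟨c, hc⟩ := hloc s
      refine ⟨max c 1, ?_⟩
      filter_upwards [hc] with y hy
      exact ⟨hup y (le_max_left _ _) hy, mem_Ici.2 (le_max_right _ _)⟩)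
  have hθs : ContDiff ℝ ∞ θ := θ.contMDiff.contDiff
  set Θ : ℝ → ℝ := fun s => ∫ r in (0:ℝ)..s, θ r with hΘ
  have hd : ∀ s, HasDerivAt Θ (θ s) s := fun s =>
    intervalIntegral.integral_hasDerivAt_right (hθs.continuous.intervalIntegrable _ _)
      hθs.continuous.stronglyMeasurable.stronglyMeasurableAtFilter hθs.continuous.continuousAt
  have hdiff : Differentiable ℝ Θ := fun s => (hd s).differentiableAt
  have hderiv : deriv Θ = θ := funext fun s => (hd s).deriv
  have hmono : StrictMono Θ := strictMono_of_deriv_pos fun s => by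
    rw [hderiv]; exact one_pos.trans_le (hθ s).2
  have h0 : Θ 0 = 0 := intervalIntegral.integral_same
  refine ⟨Θ, contDiff_infty_iff_deriv.2 ⟨hdiff, hderiv ▸ hθs⟩,
    ⟨⟨hdiff.continuous.continuousOn, hmono.strictMonoOn _, h0⟩, ?_⟩, fun s => ?_⟩
  · refine tendsto_atTop_mono' _ ?_ tendsto_id
    filter_upwards [eventually_ge_atTop 0] with s hs
    have := intervalIntegral.integral_mono_on (μ := volume) hs intervalIntegrable_const
      (hθs.continuous.intervalIntegrable 0 s) fun r _ => (hθ r).2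
    simpa using this
  · rw [hderiv]; exact ⟨(hθ s).2, (hθ s).1⟩

end Rescaling

section Converse

variable {n m p : ℕ}
  {f : EuclideanSpace ℝ (Fin n) → EuclideanSpace ℝ (Fin m) → EuclideanSpace ℝ (Fin n)}
  {h : EuclideanSpace ℝ (Fin n) → EuclideanSpace ℝ (Fin p)}
  {x : ℝ → EuclideanSpace ℝ (Fin n) → (ℝ → EuclideanSpace ℝ (Fin m)) → EuclideanSpace ℝ (Fin n)}
  {β : ℝ → ℝ → ℝ} {g : ℝ ≃o ℝ}

lemma SIIOSEstimate.exists_lyapunov (H : SIIOSEstimate f h x β g) :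
    ∃ V : EuclideanSpace ℝ (Fin n) → ℝ, IsSIIOSLyapunov f h V := by
  obtain ⟨V, hV, hV0, hVle, hVb, hVn, hVq⟩ := H.exists_contDiff_value
  obtain ⟨b, hb0, hb⟩ := hVb (1 / 2) (by norm_num)
  obtain ⟨κ, hκ, hκV⟩ := exists_classK_le (S := fun ξ => ‖h ξ‖)
    (D := fun ξ => V ξ / (1 + ‖h ξ‖)) (fun ξ => norm_nonneg _)
    (fun ξ => div_nonneg (hV0 ξ) (by positivity)) (fun c hc => by
      obtain ⟨b, hb0, hb⟩ := hVb (c / 2) (half_pos hc)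
      refine ⟨b / 2 * (c / (1 + c)), by positivity, fun ξ hξ => ?_⟩
      have h1 := H.half_norm_le ξ
      have h2 := hb ξ (by linarith)
      have h3 : c / (1 + c) ≤ ‖h ξ‖ / (1 + ‖h ξ‖) := by
        rw [div_le_div_iff₀ (by linarith) (by linarith)]
        linarith
      calc b / 2 * (c / (1 + c)) ≤ b / 2 * (‖h ξ‖ / (1 + ‖h ξ‖)) :=
            mul_le_mul_of_nonneg_left h3 (by positivity)
        _ = b * (‖h ξ‖ / 2) / (1 + ‖h ξ‖) := by ring
        _ ≤ V ξ / (1 + ‖h ξ‖) :=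
            div_le_div_of_nonneg_right ((mul_le_mul_of_nonneg_left h1 hb0.le).trans h2)
              (by positivity))
  obtain ⟨Θ, hΘ, hΘK, hΘd⟩ := exists_contDiff_classKInfty
    (t := fun s => {c | ∀ ξ μ, V ξ = s → 1 ≤ s → ‖μ‖ ≤ g (openLoopValue h x g ξ / 4) →
      c * fderiv ℝ V ξ (f ξ μ) ≤ -1})
    (fun s c c' hcc' hc ξ μ hs h1 hμ =>
      (mul_le_mul_of_nonpos_right hcc' (hVn ξ μ hμ)).trans (hc ξ μ hs h1 hμ))
    (fun s => by
      obtain ⟨q, hq0, hq⟩ := hVq (1 / 2) ((s + 1) / b) (by norm_num)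
      refine ⟨1 / q, ?_⟩
      filter_upwards [gt_mem_nhds (show s < s + 1 by linarith)] with y hy ξ μ hξ h1 hμ
      have h2 : 1 / 2 ≤ openLoopValue h x g ξ := by linarith [hVle ξ]
      have h3 : openLoopValue h x g ξ ≤ (s + 1) / b := by
        rw [le_div_iff₀ hb0]
        linarith [hb ξ h2]
      have h4 := mul_le_mul_of_nonneg_left (hq ξ μ h2 h3 hμ) (one_div_pos.2 hq0).le
      rwa [mul_neg, one_div_mul_cancel hq0.ne'] at h4)
  obtain ⟨e, he0, he⟩ := hΘK.exists_orderIso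
  have heV : ∀ ξ, Θ (V ξ) = e (V ξ) := fun ξ => (he _ (hV0 ξ)).symm
  have hg0 := g.symm_zero H.map_zero
  have hχ : IsClassKInfty fun s => 8 * g.symm s :=
    (isClassKInfty_const_mul (by norm_num)).comp (g.symm.isClassKInfty hg0)
  have hcond : ∀ ξ (μ : EuclideanSpace ℝ (Fin m)), Θ (8 * g.symm ‖μ‖) ≤ Θ (V ξ) →
      ‖μ‖ ≤ g (openLoopValue h x g ξ / 4) := fun ξ μ hle => by
    rw [heV, ← he _ (hχ.1.nonneg (norm_nonneg μ)), e.le_iff_le] at hle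
    rw [← g.symm_apply_le]
    linarith [hVle ξ]
  have hfd : ∀ ξ v, fderiv ℝ (fun ξ => Θ (V ξ)) ξ v = deriv Θ (V ξ) * fderiv ℝ V ξ v := by
    intro ξ v
    have h1 := ((hΘ.differentiable (by simp)) (V ξ)).hasDerivAt.comp_hasFDerivAt ξ
      (hV.differentiable (by simp) ξ).hasFDerivAt
    have h2 : fderiv ℝ (fun ξ => Θ (V ξ)) ξ = _ := h1.fderiv
    rw [h2, smul_apply, smul_eq_mul]
  obtain ⟨α₃, hα₃, hα₃le⟩ := exists_classK_le
    (X := {z : EuclideanSpace ℝ (Fin n) × EuclideanSpace ℝ (Fin m) //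
      Θ (8 * g.symm ‖z.2‖) ≤ Θ (V z.1)})
    (S := fun z => Θ (V z.1.1))
    (D := fun z => -fderiv ℝ (fun ξ => Θ (V ξ)) z.1.1 (f z.1.1 z.1.2))
    (fun z => hΘK.1.nonneg (hV0 _))
    (fun z => by
      rw [hfd]
      exact neg_nonneg.2 (mul_nonpos_of_nonneg_of_nonpos (zero_le_one.trans (hΘd _).1)
        (hVn _ _ (hcond _ _ z.2))))
    (fun c hc => by
      have hc' : 0 < e.symm c := by rwa [e.lt_symm_apply, he0]
      obtain ⟨b, hb0, hb⟩ := hVb (e.symm c / 2) (half_pos hc')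
      obtain ⟨q, hq0, hq⟩ := hVq (e.symm c / 2) (1 / b) (half_pos hc')
      refine ⟨min 1 q, lt_min one_pos hq0, fun z hz => ?_⟩
      obtain ⟨⟨ξ, μ⟩, hz'⟩ := z
      simp only at hz ⊢
      have hμ := hcond ξ μ hz'
      obtain ⟨h1, h2⟩ := hΘd (V ξ)
      rw [hfd]
      rcases le_or_gt 1 (V ξ) with h3 | h3
      · exact (min_le_left _ _).trans (by linarith [h2 ξ μ rfl h3 hμ])
      · have h4 : e.symm c ≤ V ξ := by rwa [heV, ← e.symm_apply_le] at hz
        have h5 : e.symm c / 2 ≤ openLoopValue h x g ξ := by linarith [hVle ξ]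
        have h6 := hq ξ μ h5 (by rw [le_div_iff₀ hb0]; linarith [hb ξ h5]) hμ
        refine (min_le_right _ _).trans ?_
        nlinarith)
  refine ⟨fun ξ => Θ (V ξ), hΘ.comp hV, fun ξ => hΘK.1.nonneg (hV0 ξ),
    ⟨_, _, hΘK.comp hκ.one_add_mul, hΘK.comp ((isClassKInfty_const_mul two_pos).comp
      (H.classKL.1 0 self_mem_Ici).add_id), fun ξ => ⟨?_, ?_⟩⟩,
    fun s => Θ (8 * g.symm s), α₃, hΘK.1.comp hχ.1, hα₃, fun ξ μ hle => ?_⟩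
  · have h1 : 0 < 1 + ‖h ξ‖ := by positivity
    have h2 := hκV ξ
    rw [le_div_iff₀ h1] at h2
    exact hΘK.1.mono (hκ.one_add_mul.1.nonneg (norm_nonneg _)) (by linarith)
  · refine hΘK.1.mono (hV0 ξ) ((hVle ξ).trans ?_)
    linarith [H.value_le ξ, norm_nonneg (h ξ)]
  · linarith [hα₃le ⟨(ξ, μ), hle⟩]

lemma IsSIIOS.exists_estimate
    (hf : LocallyLipschitz fun q : EuclideanSpace ℝ (Fin n) × EuclideanSpace ℝ (Fin m) =>
      f q.1 q.2)
    (hh : LocallyLipschitz h) (hB : IsBIBS f x) (hS : IsSIIOS h x) :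
    ∃ β g, SIIOSEstimate f h x β g := by
  obtain ⟨β, γ, hβ, hγ, hbd⟩ := hS
  obtain ⟨e, he0, he⟩ := hγ.add_id.exists_orderIso
  have hg0 := e.symm_zero he0
  refine ⟨β, e.symm, hf, hh, hB, hβ, hg0, fun ξ u a t ha ht hu hua => ?_⟩
  refine (hbd ξ u (isInput_of_norm_le hu hua) (bddInput_of_norm_le hua) t ht).trans
    (max_le_max le_rfl ?_)
  have h0 : 0 ≤ e.symm a := (e.symm.isClassKInfty hg0).1.nonneg ha
  have h1 := hγ.mono uNorm_nonneg (uNorm_le hua)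
  have h2 := he _ h0
  rw [e.apply_symm_apply] at h2
  linarith

end Converse

/-- A BIBS system is SIIOS if and only if it admits an SIIOS-Lyapunov function. -/
theorem siios_iff_exists_siiosLyapunov {n m p : ℕ}
    (f : EuclideanSpace ℝ (Fin n) → EuclideanSpace ℝ (Fin m) → EuclideanSpace ℝ (Fin n))
    (h : EuclideanSpace ℝ (Fin n) → EuclideanSpace ℝ (Fin p))
    (x : ℝ → EuclideanSpace ℝ (Fin n) → (ℝ → EuclideanSpace ℝ (Fin m)) →
      EuclideanSpace ℝ (Fin n))
    (hf : LocallyLipschitz fun q : EuclideanSpace ℝ (Fin n) × EuclideanSpace ℝ (Fin m) =>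
      f q.1 q.2)
    (hf0 : f 0 0 = 0)
    (hh : LocallyLipschitz h) (hh0 : h 0 = 0)
    (hBIBS : IsBIBS f x) :
    IsSIIOS h x ↔ ∃ V : EuclideanSpace ℝ (Fin n) → ℝ, IsSIIOSLyapunov f h V := by
  refine ⟨fun hS => ?_, fun ⟨V, hV⟩ => hV.isSIIOS hf hBIBS⟩
  obtain ⟨β, g, H⟩ := hS.exists_estimate hf hh hBIBS
  exact H.exists_lyapunov
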